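/- The asymptotic exponent ρ of binary (2,1)-separating codes satisfies ρ ≥ (3/50) · log₂ 11 (≈ 0.207565). -/

import Mathlib

/-!
The lower bound comes from concatenation. Call a linear code over `𝔽₁₂₁` intersecting if any two
nonzero words have a common nonzero coordinate. For distinct words `x, y, z` of such a code, `y - x`
and `y - z` share a nonzero coordinate, so `y` differs from both `x` and `z` there. Replacing
each symbol by one of `121` words of the shortened Nordstrom–Robinson code of length `15`, whose
mutual distances lie between `6` and `11`, makes the triangle inequality strict in that block, because
`11 < 6 + 6` (`concat_separating`). An intersecting code of length `20 r` and dimension `9 r` thus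
gives a binary `(2,1)`-separating code of length `300 r` with `121 ^ (9 r)` words, whose rate is
`9 log₂ 121 / 300 = (3 / 50) log₂ 11`. It remains to produce such codes for `r = 2ⁿ`.

They are algebraic-geometry codes from the recursive tower `y² = (x² + 1) / (2 x)` over `𝔽₁₂₁`
(Garcia–Stichtenoth). The level of degree `r = 2ⁿ` over `K(s)` is totally ramified at infinity,
is otherwise ramified only (and tamely) over the roots of `s⁵ - s`, and splits completely over a set
`T` of `20` elements of `𝔽₁₂₁` closed under the backward correspondence. This gives
`20 r` rational points. The tower is built one quadratic extension at a time (`Level`, `Level.step`,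
`Points.step`). No theory of function fields is used: the bound on the different is expressed through
the trace pairing, and it yields that of `j` and `4 r - j` one is always a pole order
at infinity (`Level.semigroup`). By this near-symmetry, the functions of pole order less
than `n` form a space of dimension `n - g` with `g ≤ 2 r` once `n > 4 r` (`exists_genus`). The
interface between geometry and coding is `CurveData`, which also contains the derivation
`Δ = (s⁵ - s) d/ds`.

Plain evaluation of functions of pole order less than `10 r` gives an intersecting code of dimension
about `8 r` only, as the product of two such functions cannot vanish at all `20 r` points. To reach
`9 r`, a set `Q` of about `(6 r - g) / 2` points is chosen such that a function of pole order
at most `6 r` whose value and derivative vanish on `Q` is zero (`exists_jets`). That so few points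
suffice is seen greedily: at a point where the Wronskian of two functions does not vanish, passing to
the functions with vanishing `1`-jet lowers the dimension by two. For the Wronskians not to vanish
identically too early, no class of functions with pairwise zero Wronskians may fill much more than
half the space, and a suitable choice of the two functions preserves this condition (`Balanced`).
The code consists of the functions of pole order at most `13 r` vanishing on `Q`, evaluated outside
`Q`, with derivatives taken on `Q`; see `exists_code`.
-/

/-- A code `C ⊆ Aⁿ` is `(2,1)`-separating if all pairwise distinct `x, y, z ∈ C`
satisfy the strict triangle inequality `d(x,z) < d(x,y) + d(y,z)` for the Hamming
distance. -/
def IsSeparating21 {ι A : Type*} [Fintype ι] [DecidableEq A] (C : Set (ι → A)) : Prop :=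
  ∀ x ∈ C, ∀ y ∈ C, ∀ z ∈ C, x ≠ y → y ≠ z → x ≠ z →
    hammingDist x z < hammingDist x y + hammingDist y z

/-- `M n`: the maximum size of a `(2,1)`-separating binary code of length `n`. -/
noncomputable def maxSepSize (n : ℕ) : ℕ :=
  sSup {m : ℕ | ∃ C : Set (Fin n → ZMod 2), IsSeparating21 C ∧ C.ncard = m}

/-- `ρ = limsup_{n → ∞} log₂ M(n) / n`, the asymptotic exponent of binary
`(2,1)`-separating codes. -/
noncomputable def rho : ℝ :=
  Filter.limsup (fun n : ℕ => Real.logb 2 (maxSepSize n) / n) Filter.atTop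

set_option linter.unusedSectionVars false

/-! ### The rational function field -/

section
open Polynomial WithZero

namespace SepCode

/-- The polynomial `s⁵ - s`, whose roots are the only finite ramification points of the tower. -/
noncomputable def mPoly (K : Type) [Field K] : K[X] := X ^ 5 - X

open Classical in
/-- The valuation at infinity of the rational function field. -/
noncomputable abbrev vInf (K : Type) [Field K] : Valuation (RatFunc K) ℤᵐ⁰ :=
  RatFunc.inftyValuation K

/-- A level `F` of the tower, of degree `r` over `K(s)`, with top generator `x`. It records what one
step of the tower needs and reproduces:
* the place at infinity, totally ramified with residue field `K`: its valuation `v` restricts to the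
  `r`-th power of the valuation at infinity of `K(s)`, and `x` has a simple pole there;
* the trace `tr` and the derivation `D = d/ds`, with bounds for both at infinity;
* for a valuation `w` nonnegative on `K[s]`: where `s⁵ - s` is a unit, `x` and `x⁴ - 1` are units
  (`good_x`) and `D` preserves regularity (`good_D`); elsewhere `(s⁵ - s) D` does not lower
  the order (`bad_D`);
* `dual`, a bound on the different: some `δ` multiplies the dual of the integral closure under
  `tr` into the integral closure, and `δ` has a zero at `w` only if `s⁵ - s` does, of smaller
  order. -/
structure Level (K : Type) [Field K] (F : Type) [Field F] [Algebra K[X] F]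
    [Algebra (RatFunc K) F] (r : ℕ) where
  x : F
  finrank_eq : Module.finrank (RatFunc K) F = r
  sep : Algebra.IsSeparable (RatFunc K) F
  v : Valuation F ℤᵐ⁰
  v_algebraMap : ∀ q : RatFunc K, v (algebraMap (RatFunc K) F q) = vInf K q ^ r
  v_x : v x = exp 1
  v_res : ∀ z w, v w ≠ 0 → v z = v w → ∃ c : K, v (z - algebraMap K[X] F (C c) * w) < v w
  v_int : ∀ z, IsIntegral K[X] z → z ≠ 0 → 1 ≤ v z
  tr : F →ₗ[RatFunc K] RatFunc K
  tr_int : ∀ z, IsIntegral K[X] z → IsIntegral K[X] (tr z)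
  tr_v : ∀ z, ∀ k : ℤ, v z = exp (r * k) → vInf K (tr z) = exp k
  D : F → F
  D_add : ∀ z w, D (z + w) = D z + D w
  D_mul : ∀ z w, D (z * w) = z * D w + D z * w
  D_algebraMap : ∀ p : K[X], D (algebraMap K[X] F p) = algebraMap K[X] F (derivative p)
  D_v : ∀ z, v (D z) * exp (r : ℤ) ≤ v z
  good_x : ∀ w : Valuation F ℤᵐ⁰, (∀ p : K[X], w (algebraMap K[X] F p) ≤ 1) →
    w (algebraMap K[X] F (mPoly K)) = 1 → w x = 1 ∧ w (x ^ 4 - 1) = 1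
  good_D : ∀ w : Valuation F ℤᵐ⁰, (∀ p : K[X], w (algebraMap K[X] F p) ≤ 1) →
    w (algebraMap K[X] F (mPoly K)) = 1 → ∀ z, w z ≤ 1 → w (D z) ≤ 1
  bad_D : ∀ w : Valuation F ℤᵐ⁰, (∀ p : K[X], w (algebraMap K[X] F p) ≤ 1) →
    w (algebraMap K[X] F (mPoly K)) < 1 →
    ∀ z, w (algebraMap K[X] F (mPoly K) * D z) ≤ w z
  dual : ∀ w : Valuation F ℤᵐ⁰, (∀ p : K[X], w (algebraMap K[X] F p) ≤ 1) →
    ∃ δ : F, (∀ h : F, (∀ b : F, IsIntegral K[X] b → IsIntegral K[X] (tr (h * b))) →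
        IsIntegral K[X] (δ * h)) ∧
      (w (algebraMap K[X] F (mPoly K)) = 1 → w δ = 1) ∧
      (w (algebraMap K[X] F (mPoly K)) < 1 → w (algebraMap K[X] F (mPoly K)) < w δ)

section Base

variable {K : Type} [Field K]

/-- Derivative with respect to the variable on the rational function field. -/
noncomputable def ratD (z : RatFunc K) : RatFunc K :=
  (algebraMap K[X] (RatFunc K) (derivative z.num * z.denom - z.num * derivative z.denom)) /
    algebraMap K[X] (RatFunc K) z.denom ^ 2

local notation "ι" => algebraMap K[X] (RatFunc K)

lemma ι_ne {q : K[X]} (hq : q ≠ 0) : ι q ≠ 0 := by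
  simpa using hq

lemma ratD_div (p q : K[X]) (hq : q ≠ 0) :
    ratD (ι p / ι q) = ι (derivative p * q - p * derivative q) / ι q ^ 2 := by
  have h1 := RatFunc.num_div_denom (ι p / ι q)
  set z := ι p / ι q with hz
  have hd := RatFunc.denom_ne_zero z
  have h2 : z.num * q = p * z.denom := by
    rw [hz, div_eq_div_iff (ι_ne hd) (ι_ne hq), ← map_mul, ← map_mul] at h1
    exact RatFunc.algebraMap_injective K h1
  have h3 := congrArg derivative h2
  simp only [derivative_mul] at h3
  unfold ratD
  rw [div_eq_div_iff (pow_ne_zero _ (ι_ne hd)) (pow_ne_zero _ (ι_ne hq)), ← map_pow, ← map_pow,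
    ← map_mul, ← map_mul]
  congr 1
  linear_combination (q * z.denom) * h3 - (z.denom * derivative q + q * derivative z.denom) * h2

lemma exists_div (z : RatFunc K) : ∃ p q : K[X], q ≠ 0 ∧ IsCoprime p q ∧ z = ι p / ι q :=
  ⟨z.num, z.denom, z.denom_ne_zero, z.isCoprime_num_denom, (RatFunc.num_div_denom z).symm⟩

lemma ratD_add (z w : RatFunc K) : ratD (z + w) = ratD z + ratD w := by
  obtain ⟨p, q, hq, -, rfl⟩ := exists_div z
  obtain ⟨a, b, hb, -, rfl⟩ := exists_div w
  have hq' := ι_ne hq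
  have hb' := ι_ne hb
  have : ι p / ι q + ι a / ι b = ι (p * b + q * a) / ι (q * b) := by
    rw [div_add_div _ _ hq' hb']; simp
  rw [this, ratD_div _ _ (mul_ne_zero hq hb), ratD_div _ _ hq, ratD_div _ _ hb]
  simp only [derivative_mul, map_add, map_sub, map_mul]
  field_simp
  ring

lemma ratD_mul (z w : RatFunc K) : ratD (z * w) = z * ratD w + ratD z * w := by
  obtain ⟨p, q, hq, -, rfl⟩ := exists_div z
  obtain ⟨a, b, hb, -, rfl⟩ := exists_div w
  have hq' := ι_ne hq
  have hb' := ι_ne hb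
  have : ι p / ι q * (ι a / ι b) = ι (p * a) / ι (q * b) := by
    rw [div_mul_div_comm]; simp
  rw [this, ratD_div _ _ (mul_ne_zero hq hb), ratD_div _ _ hq, ratD_div _ _ hb]
  simp only [derivative_mul, map_add, map_sub, map_mul]
  field_simp
  ring

lemma ratD_algebraMap (p : K[X]) : ratD (ι p) = ι (derivative p) := by
  have := ratD_div p 1 one_ne_zero
  simpa using this

lemma vInf_poly {p : K[X]} (hp : p ≠ 0) : vInf K (ι p) = exp (p.natDegree : ℤ) :=
  open Classical in RatFunc.inftyValuation.polynomial K hp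

lemma vInf_ratD (z : RatFunc K) : vInf K (ratD z) * exp (1 : ℤ) ≤ vInf K z := by
  -- for polynomials, the derivative drops the degree
  have key : ∀ p : K[X], vInf K (ι (derivative p)) * exp (1 : ℤ) ≤ vInf K (ι p) := by
    intro p
    by_cases h : derivative p = 0
    · simp [h]
    have hp : p ≠ 0 := by rintro rfl; simp at h
    have hn : p.natDegree ≠ 0 := fun h0 => h (derivative_of_natDegree_zero h0)
    have := natDegree_derivative_lt hn
    rw [vInf_poly h, vInf_poly hp, ← exp_add, exp_le_exp]
    omega
  obtain ⟨p, q, hq, -, rfl⟩ := exists_div z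
  rw [ratD_div _ _ hq]
  have hq' : 0 < vInf K (ι q) := by
    rw [zero_lt_iff, Valuation.ne_zero_iff]; exact ι_ne hq
  rw [map_div₀, map_div₀, map_pow, div_mul_eq_mul_div, div_le_div_iff₀ (pow_pos hq' 2) hq']
  have : vInf K (ι (derivative p * q - p * derivative q)) * exp (1 : ℤ)
      ≤ vInf K (ι p) * vInf K (ι q) := by
    rw [map_sub]
    refine (mul_le_mul_left (Valuation.map_sub _ _ _) _).trans ?_
    rcases le_total (vInf K (ι (derivative p * q))) (vInf K (ι (p * derivative q))) with h | h
    · rw [max_eq_right h, map_mul, map_mul, mul_assoc]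
      gcongr
      exact key q
    · rw [max_eq_left h, map_mul, map_mul, mul_right_comm]
      gcongr
      exact key p
  calc _ ≤ vInf K (ι p) * vInf K (ι q) * vInf K (ι q) := by gcongr
    _ = _ := by rw [sq, mul_assoc]
end Base
end SepCode
end

section
open Polynomial WithZero

namespace SepCode
section Base

variable {K : Type} [Field K]
local notation "ι" => algebraMap K[X] (RatFunc K)

lemma isIntegral_ratFunc {z : RatFunc K} (hz : IsIntegral K[X] z) : ∃ p : K[X], z = ι p := by
  obtain ⟨p, hp⟩ := (IsIntegrallyClosed.isIntegral_iff (R := K[X]) (K := RatFunc K)).1 hz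
  exact ⟨p, hp.symm⟩

lemma vInf_res (z w : RatFunc K) (hw : vInf K w ≠ 0) (h : vInf K z = vInf K w) :
    ∃ c : K, vInf K (z - ι (C c) * w) < vInf K w := by
  have hw0 : w ≠ 0 := (Valuation.ne_zero_iff _).1 hw
  obtain ⟨p, q, hq, -, hpq⟩ := exists_div (z / w)
  have h1 : vInf K (z / w) = 1 := by rw [map_div₀, h, div_self hw]
  have hq' := ι_ne hq
  have hp : p ≠ 0 := by
    rintro rfl
    rw [hpq] at h1; simp at h1
  have hdeg : p.natDegree = q.natDegree := by
    rw [hpq, map_div₀, vInf_poly hp, vInf_poly hq, div_eq_one_iff_eq exp_ne_zero, exp_inj] at h1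
    exact_mod_cast h1
  have hlq : q.leadingCoeff ≠ 0 := leadingCoeff_ne_zero.2 hq
  have hlp : p.leadingCoeff ≠ 0 := leadingCoeff_ne_zero.2 hp
  refine ⟨p.leadingCoeff / q.leadingCoeff, ?_⟩
  set c := p.leadingCoeff / q.leadingCoeff with hc
  have hc0 : c ≠ 0 := div_ne_zero hlp hlq
  have hz : z - ι (C c) * w = ι (p - C c * q) / ι q * w := by
    have : z = ι p / ι q * w := by rw [← hpq, div_mul_cancel₀ _ hw0]
    rw [this]; simp; field_simp
  rw [hz, map_mul, map_div₀]
  have hlt : vInf K (ι (p - C c * q)) < vInf K (ι q) := by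
    by_cases h0 : p - C c * q = 0
    · rw [h0, map_zero, map_zero, zero_lt_iff, Valuation.ne_zero_iff]; exact hq'
    rw [vInf_poly h0, vInf_poly hq, exp_lt_exp]
    have := degree_sub_lt_left (p := p) (q := C c * q)
      (by rw [degree_C_mul hc0, degree_eq_natDegree hp, degree_eq_natDegree hq, hdeg]) hp
      (by rw [leadingCoeff_mul, leadingCoeff_C, hc, div_mul_cancel₀ _ hlq])
    have := natDegree_lt_natDegree h0 this
    omega
  have hqpos : 0 < vInf K (ι q) := by
    rw [zero_lt_iff, Valuation.ne_zero_iff]; exact hq'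
  have : vInf K (ι (p - C c * q)) / vInf K (ι q) < 1 := (div_lt_one₀ hqpos).2 hlt
  calc _ < 1 * vInf K w := by
        apply mul_lt_mul_of_pos_right this (zero_lt_iff.2 hw)
    _ = _ := one_mul _

lemma val_C {F : Type} [Field F] [Algebra K[X] F] (w : Valuation F ℤᵐ⁰)
    (hw : ∀ p : K[X], w (algebraMap K[X] F p) ≤ 1) {c : K} (hc : c ≠ 0) : w (algebraMap K[X] F (C c)) = 1 := by
  refine le_antisymm (hw _) ?_
  have h : w (algebraMap K[X] F (C c)) * w (algebraMap K[X] F (C c⁻¹)) = 1 := by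
    rw [← map_mul, ← map_mul, ← C_mul, mul_inv_cancel₀ hc]; simp
  rw [← h]
  exact mul_le_of_le_one_right' (hw _)

lemma good_D_base (w : Valuation (RatFunc K) ℤᵐ⁰) (hw : ∀ p : K[X], w (ι p) ≤ 1)
    (z : RatFunc K) (hz : w z ≤ 1) : w (ratD z) ≤ 1 := by
  obtain ⟨p, q, hq, ⟨a, b, hab⟩, rfl⟩ := exists_div z
  have hq' := ι_ne hq
  have hq1 : w (ι q) = 1 := by
    refine le_antisymm (hw _) (not_lt.1 fun hlt => ?_)
    have hp : w (ι p) ≤ w (ι q) := by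
      rwa [map_div₀, div_le_one₀ (zero_lt_iff.2 ((Valuation.ne_zero_iff _).2 hq'))] at hz
    have h1 : w (ι (a * p + b * q)) < 1 := by
      rw [map_add]
      refine Valuation.map_add_lt _ ?_ ?_
      · rw [map_mul, map_mul]
        exact (mul_le_of_le_one_left' (hw _)).trans_lt (hp.trans_lt hlt)
      · rw [map_mul, map_mul]
        exact (mul_le_of_le_one_left' (hw _)).trans_lt hlt
    rw [hab] at h1
    simp at h1
  rw [ratD_div _ _ hq, map_div₀, map_pow, hq1, one_pow, div_one]
  exact hw _

/-- A place at which `s⁵ - s` vanishes lies over one of its roots, all of which are in `K`. -/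
lemma exists_root_of_bad {F : Type} [Field F] [Algebra K[X] F] (hi : ∃ i : K, i ^ 2 = -1)
    (w : Valuation F ℤᵐ⁰) (hw : ∀ p : K[X], w (algebraMap K[X] F p) ≤ 1)
    (hm : w (algebraMap K[X] F (mPoly K)) < 1) :
    ∃ a : K, ∃ q : K[X], mPoly K = (X - C a) * q ∧ w (algebraMap K[X] F (X - C a)) < 1 := by
  obtain ⟨i, hi⟩ := hi
  have hi' : (C i : K[X]) ^ 2 = -1 := by rw [← C_pow, hi]; simp
  by_contra! H
  have h1 : ∀ a : K, ∀ q : K[X], mPoly K = (X - C a) * q →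
      w (algebraMap K[X] F (X - C a)) = 1 := fun a q h => le_antisymm (hw _) (H a q h)
  have f0 := h1 0 ((X - C 1) * (X - C (-1)) * (X - C i) * (X - C (-i))) (by
    simp only [mPoly, C_0, C_1, C_neg]
    linear_combination (X ^ 3 - X) * hi')
  have f1 := h1 1 (X * (X - C (-1)) * (X - C i) * (X - C (-i))) (by
    simp only [mPoly, C_1, C_neg]
    linear_combination (X ^ 3 - X) * hi')
  have f2 := h1 (-1) (X * (X - C 1) * (X - C i) * (X - C (-i))) (by
    simp only [mPoly, C_1, C_neg]
    linear_combination (X ^ 3 - X) * hi')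
  have f3 := h1 i (X * (X - C 1) * (X - C (-1)) * (X - C (-i))) (by
    simp only [mPoly, C_1, C_neg]
    linear_combination (X ^ 3 - X) * hi')
  have f4 := h1 (-i) (X * (X - C 1) * (X - C (-1)) * (X - C i)) (by
    simp only [mPoly, C_1, C_neg]
    linear_combination (X ^ 3 - X) * hi')
  have : mPoly K = (X - C 0) * (X - C 1) * (X - C (-1)) * (X - C i) * (X - C (-i)) := by
    simp only [mPoly, C_0, C_1, C_neg]
    linear_combination (X ^ 3 - X) * hi'
  rw [this] at hm
  simp only [map_mul, f0, f1, f2, f3, f4] at hm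
  simp at hm

lemma bad_D_base (hi : ∃ i : K, i ^ 2 = -1) (w : Valuation (RatFunc K) ℤᵐ⁰)
    (hw : ∀ p : K[X], w (ι p) ≤ 1) (hm : w (ι (mPoly K)) < 1) (z : RatFunc K) :
    w (ι (mPoly K) * ratD z) ≤ w z := by
  obtain ⟨a, m1, hm1, ha⟩ := exists_root_of_bad hi w hw hm
  -- the logarithmic derivative of a polynomial has at most a simple pole at `a`
  have key : ∀ p : K[X], w (ι (mPoly K * derivative p)) ≤ w (ι p) := by
    intro p
    by_cases hp : p = 0
    · simp [hp]
    obtain ⟨q, hpq, hq⟩ := exists_eq_pow_rootMultiplicity_mul_and_not_dvd p hp a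
    set k := rootMultiplicity a p
    have hq1 : w (ι q) = 1 := by
      refine le_antisymm (hw _) (not_lt.1 fun hlt => ?_)
      have h1 : q = (X - C a) * (q /ₘ (X - C a)) + C (q.eval a) := by
        have h := modByMonic_add_div q (X - C a)
        rw [modByMonic_X_sub_C_eq_C_eval] at h
        linear_combination -h
      have h2 : q.eval a ≠ 0 := fun h => hq (dvd_iff_isRoot.2 h)
      have h3 := val_C w hw h2
      have h4 : w (ι (q - (X - C a) * (q /ₘ (X - C a)))) < 1 := by
        rw [map_sub]
        refine (Valuation.map_sub _ _ _).trans_lt (max_lt hlt ?_)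
        rw [map_mul, map_mul]
        exact (mul_le_of_le_one_right' (hw _)).trans_lt ha
      have h5 : q - (X - C a) * (q /ₘ (X - C a)) = C (q.eval a) := by
        linear_combination h1
      rw [h5, h3] at h4
      exact lt_irrefl _ h4
    have h6 : mPoly K * derivative p =
        (X - C a) ^ k * ((k : K[X]) * m1 * q + mPoly K * derivative q) := by
      conv_lhs => rw [hpq]
      rw [derivative_mul, derivative_X_sub_C_pow, hm1]
      rcases Nat.eq_zero_or_pos k with h | h
      · rw [h]; simp
      · obtain ⟨l, hl⟩ := Nat.exists_eq_succ_of_ne_zero h.ne'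
        rw [hl]; simp; ring
    have h7 : w (ι p) = w (ι ((X - C a) ^ k)) := by
      conv_lhs => rw [hpq]
      rw [map_mul, map_mul, hq1, mul_one]
    rw [h6, h7, map_mul, map_mul]
    exact mul_le_of_le_one_right' (hw _)
  obtain ⟨p, q, hq, -, rfl⟩ := exists_div z
  have hq' := ι_ne hq
  have hqpos : 0 < w (ι q) := zero_lt_iff.2 ((Valuation.ne_zero_iff _).2 hq')
  rw [ratD_div _ _ hq, mul_div_assoc', map_div₀, map_div₀, map_pow,
    div_le_div_iff₀ (pow_pos hqpos 2) hqpos, sq, ← mul_assoc, ← map_mul w]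
  rw [← map_mul (algebraMap K[X] (RatFunc K)), map_mul w _ (ι q)]
  refine mul_le_mul_left ?_ _
  have : mPoly K * (derivative p * q - p * derivative q) =
    (mPoly K * derivative p) * q - p * (mPoly K * derivative q) := by ring
  rw [this, map_sub]
  refine (Valuation.map_sub _ _ _).trans (max_le ?_ ?_)
  · rw [map_mul, map_mul]; gcongr; exact key p
  · rw [map_mul, map_mul]; gcongr; exact key q

/-- The rational function field as bottom level of the tower. -/
noncomputable def baseLevel (hi : ∃ i : K, i ^ 2 = -1) : Level K (RatFunc K) 1 where
  x := RatFunc.X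
  finrank_eq := Module.finrank_self _
  sep := inferInstance
  v := vInf K
  v_algebraMap q := by simp
  v_x := by classical exact RatFunc.inftyValuation.X K
  v_res := vInf_res
  v_int z hz hz0 := by
    obtain ⟨p, rfl⟩ := isIntegral_ratFunc hz
    have hp : p ≠ 0 := by rintro rfl; simp at hz0
    rw [vInf_poly hp, ← exp_zero, exp_le_exp]
    positivity
  tr := LinearMap.id
  tr_int z hz := hz
  tr_v z k hz := by simpa using hz
  D := ratD
  D_add := ratD_add
  D_mul := ratD_mul
  D_algebraMap := ratD_algebraMap
  D_v z := by simpa using vInf_ratD z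
  good_x w hw hm := by
    have h : mPoly K = X * (X ^ 4 - 1) := by unfold mPoly; ring
    have h1 := hw X
    have h2 := hw (X ^ 4 - 1)
    rw [h, map_mul, map_mul] at hm
    have h3 : w (ι X) = 1 := le_antisymm h1 (by
      rw [← hm]; exact mul_le_of_le_one_right' h2)
    have h4 : w (ι (X ^ 4 - 1)) = 1 := by rwa [h3, one_mul] at hm
    constructor
    · simpa using h3
    · simpa using h4
  good_D w hw _ z hz := good_D_base w hw z hz
  bad_D w hw hm z := bad_D_base hi w hw hm z
  dual w hw := ⟨1, fun h hh => by simpa using hh 1 isIntegral_one, by simp, by simp⟩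

end Base
end SepCode
end

/-! ### Integral closures -/

section
open Polynomial WithZero

namespace SepCode
section Dedekind

variable {K : Type} [Field K] {F : Type} [Field F] [Algebra K[X] F]

lemma val_le_one_of_isIntegral (w : Valuation F ℤᵐ⁰)
    (hw : ∀ p : K[X], w (algebraMap K[X] F p) ≤ 1) {z : F} (hz : IsIntegral K[X] z) :
    w z ≤ 1 := by
  have h : IsIntegral w.integer z := by
    have := hz.map_of_comp_eq
      ((algebraMap K[X] F).codRestrict w.integer hw)
      (RingHom.id F) (by ext <;> rfl)
    simpa using this
  exact Valuation.Integers.mem_of_integral (Valuation.integer.integers w) h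

variable [Algebra (RatFunc K) F] [IsScalarTower K[X] (RatFunc K) F]
  [FiniteDimensional (RatFunc K) F]

variable (K) in
lemma fraction_closure : IsFractionRing (integralClosure K[X] F) F :=
  integralClosure.isFractionRing_of_finite_extension (RatFunc K) F

variable [Algebra.IsSeparable (RatFunc K) F]

variable (K) in
lemma dedekind_closure : IsDedekindDomain (integralClosure K[X] F) :=
  integralClosure.isDedekindDomain K[X] (RatFunc K) F

/-- An element which is regular for all valuations that are regular on `K[X]` is integral. -/
lemma isIntegral_of_val (z : F)
    (h : ∀ w : Valuation F ℤᵐ⁰, (∀ p : K[X], w (algebraMap K[X] F p) ≤ 1) → w z ≤ 1) :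
    IsIntegral K[X] z := by
  have := dedekind_closure K (F := F)
  have := fraction_closure K (F := F)
  obtain ⟨b, hb⟩ := IsDedekindDomain.HeightOneSpectrum.mem_integers_of_valuation_le_one
    (R := integralClosure K[X] F) F z (fun P => h (P.valuation F) fun p => by
      rw [IsScalarTower.algebraMap_apply K[X] (integralClosure K[X] F) F]
      exact P.valuation_le_one _)
  rw [← hb]
  exact b.2

/-- Elements regular at `w` become integral after multiplication by an integral `w`-unit. -/
lemma exists_unit_mul_isIntegral (w : Valuation F ℤᵐ⁰)
    (hw : ∀ p : K[X], w (algebraMap K[X] F p) ≤ 1) (z : F) (hz : w z ≤ 1) :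
    ∃ u : F, IsIntegral K[X] u ∧ w u = 1 ∧ IsIntegral K[X] (u * z) := by
  have := dedekind_closure K (F := F)
  have := fraction_closure K (F := F)
  obtain ⟨a, b, hb, rfl⟩ := IsFractionRing.div_surjective (A := integralClosure K[X] F) z
  have hb0 : b ≠ 0 := nonZeroDivisors.ne_zero hb
  have hbF : (b : F) ≠ 0 := by simpa using hb0
  -- invertibility of the ideal `(a, b)`
  have hdvd : Ideal.span {a, b} ∣ Ideal.span {b} := by
    rw [Ideal.dvd_iff_le]
    exact Ideal.span_mono (by simp)
  obtain ⟨I, hI⟩ := hdvd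
  have hmem : b ∈ Ideal.span {a, b} * I := by
    rw [← hI]; exact Ideal.mem_span_singleton_self b
  rw [Ideal.span_insert, Ideal.sup_mul, Submodule.mem_sup] at hmem
  obtain ⟨_, h1, _, h2, h12⟩ := hmem
  obtain ⟨i, hi, rfl⟩ := Ideal.mem_span_singleton_mul.1 h1
  obtain ⟨j, hj, rfl⟩ := Ideal.mem_span_singleton_mul.1 h2
  have hdiv : ∀ k ∈ I, ∀ c ∈ ({a, b} : Set (integralClosure K[X] F)),
      IsIntegral K[X] ((k : F) / b * c) := by
    intro k hk c hc
    have : c * k ∈ Ideal.span {b} := by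
      rw [hI]; exact Ideal.mul_mem_mul (Ideal.subset_span hc) hk
    obtain ⟨e, he⟩ := Ideal.mem_span_singleton.1 this
    have he' : (c : F) * k = b * e := by exact_mod_cast congrArg Subtype.val he
    have : (k : F) / b * c = e := by field_simp; linear_combination he'
    rw [this]; exact e.2
  have h12' : (a : F) * i + b * j = b := by exact_mod_cast congrArg Subtype.val h12
  have hsum : (i : F) / b * a + (j : F) / b * b = 1 := by field_simp; linear_combination h12'
  have hia := hdiv i hi a (by simp)
  have hib := hdiv i hi b (by simp)
  have hja := hdiv j hj a (by simp)
  have hjb := hdiv j hj b (by simp)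
  have ha1 := val_le_one_of_isIntegral w hw hia
  have hb1 := val_le_one_of_isIntegral w hw hjb
  change w ((a : F) / b) ≤ 1 at hz
  by_cases hc : w ((j : F) / b * b) = 1
  · refine ⟨_, hjb, hc, ?_⟩
    convert hja using 1
    change (j : F) / b * b * ((a : F) / b) = _
    field_simp
  · have hlt := lt_of_le_of_ne hb1 hc
    have ha2 : w ((i : F) / b * a) = 1 := by
      refine le_antisymm ha1 (not_lt.1 fun h => ?_)
      have := Valuation.map_add_lt w h hlt
      rw [hsum] at this; simp at this
    have hrel : (i : F) / b * b * ((a : F) / b) = (i : F) / b * a := by field_simp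
    refine ⟨_, hib, ?_, ?_⟩
    · refine le_antisymm (val_le_one_of_isIntegral w hw hib) ?_
      rw [← ha2, ← hrel, map_mul w (_ * _)]
      exact mul_le_of_le_one_right' hz
    · change IsIntegral K[X] ((i : F) / b * b * ((a : F) / b))
      rw [hrel]; exact hia

end Dedekind
end SepCode
end

/-! ### Valuations on quadratic extensions -/

section
open Polynomial WithZero

namespace SepCode
section Quad

open QuadraticAlgebra

/-! ### Quadratic extensions with odd pole order of the radicand -/

variable {F : Type} [Field F] (v : Valuation F ℤᵐ⁰) {f : F}

/-- The value of a square times an element of order one is never that of a nonzero square. -/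
lemma parity {a b : F} (h : v a ^ 2 = v b ^ 2 * exp (1 : ℤ)) : a = 0 ∧ b = 0 := by
  by_cases hb : b = 0
  · subst hb; simpa using h
  by_cases ha : a = 0
  · subst ha; simp [hb] at h
  exfalso
  have h1 := congrArg log h
  rw [log_mul (by simpa using hb) exp_ne_zero, log_pow, log_pow, log_exp] at h1
  simp only [nsmul_eq_mul] at h1
  push_cast at h1
  omega

lemma val_norm (hv : v f = exp (1 : ℤ)) (z : QuadraticAlgebra F f 0) :
    v (norm z) = max (v z.re ^ 2) (v z.im ^ 2 * exp (1 : ℤ)) := by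
  have h1 : norm z = z.re ^ 2 - f * z.im ^ 2 := by rw [norm_def]; ring
  have h2 : v (f * z.im ^ 2) = v z.im ^ 2 * exp (1 : ℤ) := by rw [map_mul, hv, map_pow, mul_comm]
  rw [h1]
  by_cases h : v z.re ^ 2 = v z.im ^ 2 * exp (1 : ℤ)
  · obtain ⟨h3, h4⟩ := parity v h
    simp [h3, h4]
  · rw [← h2, ← map_pow]
    rw [← h2, ← map_pow] at h
    rw [sub_eq_add_neg, Valuation.map_add_of_distinct_val, Valuation.map_neg]
    rwa [Valuation.map_neg]

/-- The extension of a valuation to a quadratic extension ramified at it. -/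
noncomputable def valE (hv : v f = exp (1 : ℤ)) : Valuation (QuadraticAlgebra F f 0) ℤᵐ⁰ where
  toFun z := v (norm z)
  map_zero' := by simp
  map_one' := by simp
  map_mul' z w := by simp
  map_add_le_max' z w := by
    simp only [val_norm v hv, re_add, im_add]
    have h1 := Valuation.map_add v z.re w.re
    have h2 := Valuation.map_add v z.im w.im
    refine max_le ?_ ?_
    · rcases le_max_iff.1 h1 with h | h
      · exact (pow_le_pow_left' h 2).trans ((le_max_left _ _).trans (le_max_left _ _))
      · exact (pow_le_pow_left' h 2).trans ((le_max_left _ _).trans (le_max_right _ _))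
    · rcases le_max_iff.1 h2 with h | h
      · exact (mul_le_mul_left (pow_le_pow_left' h 2) _).trans
          ((le_max_right _ _).trans (le_max_left _ _))
      · exact (mul_le_mul_left (pow_le_pow_left' h 2) _).trans
          ((le_max_right _ _).trans (le_max_right _ _))

lemma valE_eq (hv : v f = exp (1 : ℤ)) (z : QuadraticAlgebra F f 0) :
    valE v hv z = max (v z.re ^ 2) (v z.im ^ 2 * exp (1 : ℤ)) := val_norm v hv z

lemma nonsq (hv : v f = exp (1 : ℤ)) : ∀ z : F, z ^ 2 ≠ f + 0 * z := by
  intro z hz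
  have := parity v (a := z) (b := 1) (by rw [← map_pow, hz]; simp [hv])
  simp at this

/-- Total ramification: the extended valuation has the same residue field. -/
lemma valE_res (hv : v f = exp (1 : ℤ)) {K : Type} (κ : K → F) (hκ : ∀ c, v (κ c) ≤ 1)
    (hres : ∀ z w, v w ≠ 0 → v z = v w → ∃ c : K, v (z - κ c * w) < v w)
    (z w : QuadraticAlgebra F f 0) (hw : valE v hv w ≠ 0) (h : valE v hv z = valE v hv w) :
    ∃ c : K, valE v hv (z - algebraMap F _ (κ c) * w) < valE v hv w := by
  have hre : ∀ c, (z - algebraMap F _ (κ c) * w).re = z.re - κ c * w.re := by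
    intro c; simp [QuadraticAlgebra.algebraMap_eq]
  have him : ∀ c, (z - algebraMap F _ (κ c) * w).im = z.im - κ c * w.im := by
    intro c; simp [QuadraticAlgebra.algebraMap_eq]
  have hsub : ∀ c (a b : F), v (a - κ c * b) ≤ max (v a) (v b) := fun c a b => by
    refine (Valuation.map_sub _ _ _).trans (max_le_max le_rfl ?_)
    rw [map_mul]; exact mul_le_of_le_one_left' (hκ c)
  have hE : (0 : ℤᵐ⁰) < exp (1 : ℤ) := exp_pos
  simp only [valE_eq] at *
  simp only [hre, him]
  set A := v z.re ^ 2 with hA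
  set B := v z.im ^ 2 * exp (1 : ℤ) with hB
  set A' := v w.re ^ 2 with hA'
  set B' := v w.im ^ 2 * exp (1 : ℤ) with hB'
  rcases lt_trichotomy A' B' with hlt | heq | hlt
  · rw [max_eq_right hlt.le] at h hw ⊢
    have hA1 : A < B' := by
      refine lt_of_le_of_ne (h ▸ le_max_left _ _) fun he => hw ?_
      have := (parity v (a := z.re) (b := w.im) he).2
      simp [hB', this]
    have hB1 : B = B' := by
      rcases max_choice A B with h1 | h1
      · exact absurd (h1.symm.trans h) hA1.ne
      · exact h1.symm.trans h
    have him' : v z.im = v w.im := by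
      have := mul_right_cancel₀ exp_ne_zero hB1
      exact (pow_left_inj₀ zero_le zero_le two_ne_zero).1 this
    have hw0 : v w.im ≠ 0 := fun h0 => hw (by simp [hB', h0])
    obtain ⟨c, hc⟩ := hres _ _ hw0 him'
    refine ⟨c, max_lt ?_ ?_⟩
    · refine lt_of_le_of_lt (pow_le_pow_left' (hsub c _ _) 2) ?_
      rcases le_total (v z.re) (v w.re) with h | h
      · rwa [max_eq_right h]
      · rwa [max_eq_left h]
    · exact mul_lt_mul_of_pos_right (pow_lt_pow_left₀ hc zero_le two_ne_zero) hE
  · exfalso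
    obtain ⟨h1, h2⟩ := parity v heq
    simp [hA', hB', h1, h2] at hw
  · rw [max_eq_left hlt.le] at h hw ⊢
    have hB1 : B < A' := by
      refine lt_of_le_of_ne (h ▸ le_max_right _ _) fun he => hw ?_
      have := (parity v (a := w.re) (b := z.im) he.symm).1
      simp [hA', this]
    have hA1 : A = A' := by
      rcases max_choice A B with h1 | h1
      · exact h1.symm.trans h
      · exact absurd (h1.symm.trans h) hB1.ne
    have hre' : v z.re = v w.re := (pow_left_inj₀ zero_le zero_le two_ne_zero).1 hA1
    have hw0 : v w.re ≠ 0 := fun h0 => hw (by simp [hA', h0])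
    obtain ⟨c, hc⟩ := hres _ _ hw0 hre'
    refine ⟨c, max_lt ?_ ?_⟩
    · exact pow_lt_pow_left₀ hc zero_le two_ne_zero
    · refine lt_of_le_of_lt (mul_le_mul_left (pow_le_pow_left' (hsub c _ _) 2) _) ?_
      rcases le_total (v z.im) (v w.im) with h | h
      · rwa [max_eq_right h]
      · rwa [max_eq_left h]

/-- Integral elements of `F(√f)`, in terms of coordinates. -/
lemma isIntegral_quad {A : Type} [CommRing A] [Algebra A F] (h2 : (2 : F) ≠ 0)
    (h2' : IsIntegral A (2⁻¹ : F)) (z : QuadraticAlgebra F f 0) :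
    IsIntegral A z ↔ IsIntegral A z.re ∧ IsIntegral A (z.im ^ 2 * f) := by
  have hinj := algebraMap_injective (a := f) (b := (0 : F))
  constructor
  · intro hz
    have hz' : IsIntegral A (star z) := by
      obtain ⟨p, hp, hpz⟩ := hz
      refine ⟨p, hp, ?_⟩
      have h1 := congrArg (starRingEnd (QuadraticAlgebra F f 0)) hpz
      rw [hom_eval₂, map_zero] at h1
      rw [← h1]
      congr 1
      ext a <;> simp [RingHom.comp_apply, starRingEnd_apply, IsScalarTower.algebraMap_apply A F
        (QuadraticAlgebra F f 0), QuadraticAlgebra.algebraMap_eq]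
    have h1 : IsIntegral A (2 * z.re) := by
      rw [← isIntegral_algebraMap_iff hinj]
      have := hz.add hz'
      convert this using 1
      ext <;> simp [QuadraticAlgebra.algebraMap_eq, two_mul]
    have hre : IsIntegral A z.re := by
      have := h2'.mul h1
      rwa [inv_mul_cancel_left₀ h2] at this
    refine ⟨hre, ?_⟩
    have h3 : IsIntegral A (norm z) := by
      rw [← isIntegral_algebraMap_iff hinj, algebraMap_norm_eq_mul_star]
      exact hz.mul hz'
    have h4 := (hre.pow 2).sub h3
    have h5 : z.im ^ 2 * f = z.re ^ 2 - norm z := by rw [norm_def]; ring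
    rw [h5]; exact h4
  · rintro ⟨h1, h3⟩
    have h4 : z = algebraMap F _ z.re + ⟨0, z.im⟩ := by ext <;> simp [QuadraticAlgebra.algebraMap_eq]
    rw [h4]
    refine (h1.map (Algebra.algHom A F (QuadraticAlgebra F f 0))).add
      (IsIntegral.of_pow (n := 2) two_pos ?_)
    have h5 : (⟨0, z.im⟩ : QuadraticAlgebra F f 0) ^ 2 = algebraMap F _ (z.im ^ 2 * f) := by
      ext <;> simp [QuadraticAlgebra.algebraMap_eq, sq]; ring
    rw [h5]
    exact h3.map (Algebra.algHom A F (QuadraticAlgebra F f 0))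

lemma separable_quad [Fact (∀ z : F, z ^ 2 ≠ f + 0 * z)] (h2 : (2 : F) ≠ 0) (hf : f ≠ 0) :
    Algebra.IsSeparable F (QuadraticAlgebra F f 0) := by
  have hω : IsSeparable F (ω : QuadraticAlgebra F f 0) := by
    have hsep : (X ^ 2 - C f : F[X]).Separable :=
      separable_X_pow_sub_C f (by exact_mod_cast h2) hf
    refine hsep.of_dvd (minpoly.dvd _ _ ?_)
    have : (ω : QuadraticAlgebra F f 0) * ω = algebraMap F _ f := by
      rw [omega_mul_omega_eq_mk]; rfl
    simp [sq, this]
  have h1 := (IntermediateField.isSeparable_adjoin_simple_iff_isSeparable (F := F)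
    (E := QuadraticAlgebra F f 0)).2 hω
  have htop : IntermediateField.adjoin F {(ω : QuadraticAlgebra F f 0)} = ⊤ := by
    rw [eq_top_iff]
    intro z _
    have : z = algebraMap F _ z.re + algebraMap F _ z.im * ω := by
      ext <;> simp [QuadraticAlgebra.algebraMap_eq]
    rw [this]
    exact add_mem (IntermediateField.algebraMap_mem _ _)
      (mul_mem (IntermediateField.algebraMap_mem _ _)
        (IntermediateField.mem_adjoin_simple_self F _))
  rw [htop] at h1
  exact Algebra.IsSeparable.of_algHom F _ (IntermediateField.topEquiv (F := F)
    (E := QuadraticAlgebra F f 0)).symm.toAlgHom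

end Quad
end SepCode
end

/-! ### Derivations on quadratic extensions -/

section
open Polynomial WithZero

namespace SepCode
section QuadD

open QuadraticAlgebra

variable {F : Type} [Field F] {f : F}

/-- The extension of a derivation `D` of `F` to `F(√f)`. -/
noncomputable def quadD (D : F → F) (z : QuadraticAlgebra F f 0) : QuadraticAlgebra F f 0 :=
  ⟨D z.re, D z.im + z.im * D f / (2 * f)⟩

variable {D : F → F}

lemma D_zero (hadd : ∀ z w, D (z + w) = D z + D w) : D 0 = 0 := by
  have := hadd 0 0
  simpa using this

lemma D_neg (hadd : ∀ z w, D (z + w) = D z + D w) (z : F) : D (-z) = - D z := by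
  have := hadd z (-z)
  rw [add_neg_cancel, D_zero hadd] at this
  linear_combination -this

lemma D_one (hmul : ∀ z w, D (z * w) = z * D w + D z * w) : D 1 = 0 := by
  have := hmul 1 1
  simpa using this

lemma quadD_add (hadd : ∀ z w, D (z + w) = D z + D w) (z w : QuadraticAlgebra F f 0) :
    quadD D (z + w) = quadD D z + quadD D w := by
  ext
  · simp [quadD, hadd]
  · simp [quadD, hadd]; ring

lemma quadD_mul (hadd : ∀ z w, D (z + w) = D z + D w)
    (hmul : ∀ z w, D (z * w) = z * D w + D z * w) (h2 : (2 : F) ≠ 0) (hf : f ≠ 0)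
    (z w : QuadraticAlgebra F f 0) :
    quadD D (z * w) = z * quadD D w + quadD D z * w := by
  ext
  · simp [quadD, hadd, hmul]; field_simp; ring
  · simp [quadD, hadd, hmul]; field_simp; ring

lemma quadD_algebraMap (hadd : ∀ z w, D (z + w) = D z + D w) (a : F) :
    quadD D (algebraMap F (QuadraticAlgebra F f 0) a) = algebraMap F _ (D a) := by
  ext <;> simp [quadD, QuadraticAlgebra.algebraMap_eq, D_zero hadd]

section val

lemma decomp (z : QuadraticAlgebra F f 0) :
    z = algebraMap F _ z.re + algebraMap F _ z.im * ω := by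
  ext <;> simp [QuadraticAlgebra.algebraMap_eq]

lemma omega_sq : (ω : QuadraticAlgebra F f 0) * ω = algebraMap F _ f := by
  rw [omega_mul_omega_eq_mk]; rfl

variable [Fact (∀ z : F, z ^ 2 ≠ f + 0 * z)] (w : Valuation (QuadraticAlgebra F f 0) ℤᵐ⁰)

lemma val_omega_sq : w ω ^ 2 = w (algebraMap F _ f) := by
  rw [← map_pow, sq, omega_sq]

lemma quadD_expand (z : QuadraticAlgebra F f 0) :
    quadD D z = algebraMap F _ (D z.re) + (algebraMap F _ (D z.im) * ω
      + algebraMap F _ (D f / (2 * f)) * (algebraMap F _ z.im * ω)) := by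
  unfold quadD
  rw [mul_div_assoc]
  generalize D f / (2 * f) = e
  ext
  · simp [QuadraticAlgebra.algebraMap_eq]
  · simp [QuadraticAlgebra.algebraMap_eq]; ring

/-- If the conjugates `a ± b√f` cancel at `w`, then the other conjugate does not. -/
lemma cancel_dichotomy (h2 : w 2 = 1) (z : QuadraticAlgebra F f 0)
    (h : w z < w (algebraMap F _ z.re)) :
    w (star z) = w (algebraMap F _ z.re) ∧
      w (algebraMap F _ z.im * ω) = w (algebraMap F _ z.re) := by
  have h1 : star z = 2 * algebraMap F _ z.re - z := by
    ext
    · simp [QuadraticAlgebra.algebraMap_eq]; ring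
    · simp [QuadraticAlgebra.algebraMap_eq]
  have h3 : algebraMap F _ z.im * ω = z - algebraMap F _ z.re := by
    nth_rewrite 2 [decomp z]; ring
  constructor
  · rw [h1, Valuation.map_sub_eq_of_lt_left _ (by simpa [h2] using h)]
    simp [h2]
  · rw [h3, Valuation.map_sub_eq_of_lt_right _ h]

/-- If the logarithmic derivation `m D` does not lower orders on `F`, neither does its extension to
`F(√f)`, no matter how `w` ramifies. -/
lemma quadD_bad (hadd : ∀ z w, D (z + w) = D z + D w)
    (hmul : ∀ z w, D (z * w) = z * D w + D z * w) (h2F : (2 : F) ≠ 0) (hf : f ≠ 0)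
    (h2 : w 2 = 1) (m : F)
    (hD : ∀ z : F, w (algebraMap F _ (m * D z)) ≤ w (algebraMap F _ z))
    (z : QuadraticAlgebra F f 0) : w (algebraMap F _ m * quadD D z) ≤ w z := by
  -- no cancellation
  have key : ∀ z : QuadraticAlgebra F f 0, w (algebraMap F _ z.re) ≤ w z →
      w (algebraMap F _ z.im * ω) ≤ w z → w (algebraMap F _ m * quadD D z) ≤ w z := by
    intro z ha hb
    rw [quadD_expand]
    have e : algebraMap F _ m * (algebraMap F (QuadraticAlgebra F f 0) (D z.re) +
        (algebraMap F _ (D z.im) * ω + algebraMap F _ (D f / (2 * f)) * (algebraMap F _ z.im * ω)))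
        = algebraMap F _ (m * D z.re) + (algebraMap F _ (m * D z.im) * ω +
          algebraMap F _ (m * D f) / (2 * algebraMap F _ f) * (algebraMap F _ z.im * ω)) := by
      have : algebraMap F (QuadraticAlgebra F f 0) (D f / (2 * f)) =
          algebraMap F _ (D f) / (2 * algebraMap F _ f) := by
        rw [map_div₀, map_mul, map_ofNat]
      rw [this, map_mul, map_mul, map_mul]; ring
    rw [e]
    have hf' : 0 < w (algebraMap F _ f) := by
      rw [zero_lt_iff, Valuation.ne_zero_iff]
      simpa using hf
    refine Valuation.map_add_le _ ((hD _).trans ha) (Valuation.map_add_le _ ?_ ?_)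
    · rw [map_mul] at hb ⊢
      exact (mul_le_mul_left (hD _) _).trans hb
    · rw [map_mul, map_div₀, map_mul w 2, h2, one_mul]
      refine (mul_le_of_le_one_left' ?_).trans hb
      exact (div_le_one₀ hf').2 (hD f)
  by_cases hc : w (algebraMap F _ z.re) ≤ w z
  · refine key z hc ?_
    have h3 : algebraMap F _ z.im * ω = z - algebraMap F _ z.re := by
      nth_rewrite 2 [decomp z]; ring
    rw [h3]
    exact (Valuation.map_sub _ _ _).trans (max_le le_rfl hc)
  push Not at hc
  obtain ⟨h3, h4⟩ := cancel_dichotomy w h2 z hc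
  have h5 : w (algebraMap F _ m * quadD D (star z)) ≤ w (star z) := by
    apply key
    · rw [h3]; simp
    · rw [h3, ← h4]; simp
  have h6 : w (algebraMap F _ m * quadD D (z * star z)) ≤ w (z * star z) := by
    rw [← algebraMap_norm_eq_mul_star, quadD_algebraMap hadd, ← map_mul]
    exact hD _
  have h7 : algebraMap F _ m * quadD D z * star z =
      algebraMap F _ m * quadD D (z * star z) - z * (algebraMap F _ m * quadD D (star z)) := by
    rw [quadD_mul hadd hmul h2F hf]; ring
  have h8 : w (algebraMap F _ m * quadD D z * star z) ≤ w z * w (star z) := by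
    rw [h7]
    refine (Valuation.map_sub _ _ _).trans (max_le ?_ ?_)
    · rwa [map_mul w z] at h6
    · rw [map_mul w z]; gcongr
  rw [map_mul w _ (star z)] at h8
  have h9 : 0 < w (star z) := by rw [h3]; exact lt_of_le_of_lt zero_le hc
  exact le_of_mul_le_mul_right h8 h9

/-- Where `f` is a unit, the extension of `D` to `F(√f)` preserves regularity. -/
lemma quadD_good (hadd : ∀ z w, D (z + w) = D z + D w)
    (hmul : ∀ z w, D (z * w) = z * D w + D z * w) (h2F : (2 : F) ≠ 0) (hf : f ≠ 0)
    (h2 : w 2 = 1) (hf1 : w (algebraMap F _ f) = 1)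
    (hD : ∀ z : F, w (algebraMap F _ z) ≤ 1 → w (algebraMap F _ (D z)) ≤ 1)
    (z : QuadraticAlgebra F f 0) (hz : w z ≤ 1) : w (quadD D z) ≤ 1 := by
  have hω : w ω = 1 := by
    have := val_omega_sq w
    rw [hf1] at this
    exact (pow_eq_one_iff_of_nonneg zero_le two_ne_zero).1 this
  have key : ∀ z : QuadraticAlgebra F f 0, w (algebraMap F _ z.re) ≤ 1 →
      w (algebraMap F _ z.im) ≤ 1 → w (quadD D z) ≤ 1 := by
    intro z ha hb
    rw [quadD_expand]
    refine Valuation.map_add_le _ (hD _ ha) (Valuation.map_add_le _ ?_ ?_)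
    · rw [map_mul, hω, mul_one]; exact hD _ hb
    · rw [map_mul, map_div₀, map_div₀, map_mul, map_mul w, map_mul w, hω, mul_one, hf1, map_ofNat,
        h2, mul_one, div_one]
      exact mul_le_one' (hD _ hf1.le) hb
  by_cases hc : w (algebraMap F _ z.re) ≤ 1
  · refine key z hc ?_
    have h3 : algebraMap F _ z.im * ω = z - algebraMap F _ z.re := by
      nth_rewrite 2 [decomp z]; ring
    have h4 : w (algebraMap F _ z.im * ω) ≤ 1 := by
      rw [h3]
      exact (Valuation.map_sub _ _ _).trans (max_le hz hc)
    rwa [map_mul, hω, mul_one] at h4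
  push Not at hc
  obtain ⟨h3, h4⟩ := cancel_dichotomy w h2 z (hz.trans_lt hc)
  rw [map_mul, hω, mul_one] at h4
  have ha0 : z.re ≠ 0 := by
    intro h; rw [h] at hc; simp at hc
  have haE : algebraMap F (QuadraticAlgebra F f 0) z.re ≠ 0 := by simpa using ha0
  have hwa : w (algebraMap F _ z.re) ≠ 0 := (Valuation.ne_zero_iff _).2 haE
  -- `t = z̄ / a` is a unit at `w` without cancellation, and `z t` comes from `F`
  set t : QuadraticAlgebra F f 0 := ⟨1, -(z.im / z.re)⟩ with ht
  have hta : t * algebraMap F _ z.re = star z := by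
    ext <;> simp [ht, QuadraticAlgebra.algebraMap_eq]
    field_simp
  have ht1 : w t = 1 := by
    have := congrArg w hta
    rw [map_mul, h3] at this
    exact (mul_eq_right₀ hwa).1 this
  have htD : w (quadD D t) ≤ 1 := by
    apply key
    · simp [ht]
    · simp [ht, h4, hwa]
  have hzt : z * t = algebraMap F _ (norm z / z.re) := by
    have : z * t * algebraMap F _ z.re = algebraMap F _ (norm z) := by
      rw [mul_assoc, hta, algebraMap_norm_eq_mul_star]
    rw [map_div₀, eq_div_iff haE, this]
  have h6 : w (quadD D (z * t)) ≤ 1 := by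
    rw [hzt, quadD_algebraMap hadd]
    apply hD
    rw [← hzt, map_mul, ht1, mul_one]; exact hz
  have h7 : quadD D z * t = quadD D (z * t) - z * quadD D t := by
    rw [quadD_mul hadd hmul h2F hf]; ring
  have h8 : w (quadD D z * t) ≤ 1 := by
    rw [h7]
    refine (Valuation.map_sub _ _ _).trans (max_le h6 ?_)
    rw [map_mul]; exact mul_le_one' hz htD
  rwa [map_mul, ht1, mul_one] at h8

end val

/-- Every nonzero `f` is, up to squares, a unit or a uniformizer at a discrete valuation. -/
lemma exists_sq_mul (w : Valuation F ℤᵐ⁰) (hf : f ≠ 0) :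
    ∃ c : F, c ≠ 0 ∧ w (c ^ 2 * f) ≤ 1 ∧ (∀ z, w z < 1 → w z ^ 2 < w (c ^ 2 * f)) ∧
      (w f = 1 → w (c ^ 2 * f) = 1) := by
  classical
  by_cases h1 : w f = 1
  · exact ⟨1, one_ne_zero, by simp [h1], fun z hz => by
      simpa [h1] using pow_lt_one₀ zero_le hz two_ne_zero, by simp [h1]⟩
  let P : ℕ → Prop := fun n => ∃ c : F, c ≠ 0 ∧ w (c ^ 2 * f) = exp (-(n : ℤ))
  have hlog : ∀ c : F, c ≠ 0 → w (c ^ 2 * f) ≤ 1 →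
      ∃ n : ℕ, w (c ^ 2 * f) = exp (-(n : ℤ)) := by
    intro c hc hle
    have h0 : w (c ^ 2 * f) ≠ 0 := (Valuation.ne_zero_iff _).2 (mul_ne_zero (pow_ne_zero _ hc) hf)
    refine ⟨(-(log (w (c ^ 2 * f)))).toNat, ?_⟩
    have : log (w (c ^ 2 * f)) ≤ 0 := by
      rw [← exp_log h0, ← exp_zero, exp_le_exp] at hle; exact hle
    rw [Int.toNat_of_nonneg (by omega), neg_neg, exp_log h0]
  have hex : ∃ n, P n := by
    rcases le_total (w f) 1 with h | h
    · obtain ⟨n, hn⟩ := hlog 1 one_ne_zero (by simpa using h)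
      exact ⟨n, 1, one_ne_zero, hn⟩
    · have : f⁻¹ ^ 2 * f = f⁻¹ := by field_simp
      obtain ⟨n, hn⟩ := hlog f⁻¹ (inv_ne_zero hf) (by
        rw [this, map_inv₀]; exact inv_le_one_of_one_le₀ h)
      exact ⟨n, f⁻¹, inv_ne_zero hf, hn⟩
  obtain ⟨c, hc, hcn⟩ := Nat.find_spec hex
  refine ⟨c, hc, ?_, fun z hz => ?_, fun h => absurd h h1⟩
  · rw [hcn, ← exp_zero, exp_le_exp]; omega
  by_contra! hle
  have hz0 : z ≠ 0 := by
    rintro rfl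
    rw [hcn] at hle; simp at hle
  have hwz : 0 < w z := zero_lt_iff.2 ((Valuation.ne_zero_iff _).2 hz0)
  have e : w ((c / z) ^ 2 * f) = w (c ^ 2 * f) / w z ^ 2 := by
    rw [← map_pow, ← map_div₀]; congr 1; ring
  obtain ⟨n, hn⟩ := hlog (c / z) (div_ne_zero hc hz0) (by
    rw [e]; exact (div_le_one₀ (pow_pos hwz 2)).2 hle)
  have hmin := Nat.find_min' hex ⟨c / z, div_ne_zero hc hz0, hn⟩
  have hlt : w (c ^ 2 * f) < w ((c / z) ^ 2 * f) := by
    rw [e, lt_div_iff₀ (pow_pos hwz 2)]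
    have hpos : 0 < w (c ^ 2 * f) := by rw [hcn]; exact exp_pos
    exact mul_lt_of_lt_one_right hpos (pow_lt_one₀ zero_le hz two_ne_zero)
  rw [hn, hcn, exp_lt_exp] at hlt
  omega

end QuadD
end SepCode
end

/-! ### Levels of the tower -/

section
open Polynomial WithZero QuadraticAlgebra


namespace SepCode

variable {K : Type} [Field K] {F : Type} [Field F] [Algebra K[X] F] [Algebra (RatFunc K) F]
  [IsScalarTower K[X] (RatFunc K) F] {r : ℕ}

lemma max_mul' (a b c : ℤᵐ⁰) : max a b * c = max (a * c) (b * c) :=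
  Monotone.map_max (f := fun t => t * c) fun _ _ h => mul_le_mul_left h c

/-- The radicand of the next step of the tower: the next generator `y` satisfies
`y² = (x² + 1) / (2 x)`. -/
noncomputable def Level.f (L : Level K F r) : F := (L.x ^ 2 + 1) / (2 * L.x)

lemma two_eq : (2 : F) = algebraMap K[X] F (C 2) := by
  rw [show (C 2 : K[X]) = 2 from map_ofNat C 2, map_ofNat]

lemma two_ne (h2 : (2 : K) ≠ 0) : (2 : F) ≠ 0 := by
  rw [two_eq (K := K), IsScalarTower.algebraMap_apply K[X] (RatFunc K) F]
  simpa using h2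

lemma two_inv_integral (h2 : (2 : K) ≠ 0) : IsIntegral K[X] (2⁻¹ : F) := by
  have : (2⁻¹ : F) = algebraMap K[X] F (C 2⁻¹) := by
    apply inv_eq_of_mul_eq_one_right
    rw [two_eq (K := K), ← map_mul, ← Polynomial.C_mul, mul_inv_cancel₀ h2]; simp
  rw [this]
  exact isIntegral_algebraMap

lemma val_two (h2 : (2 : K) ≠ 0) (w : Valuation F ℤᵐ⁰)
    (hw : ∀ p : K[X], w (algebraMap K[X] F p) ≤ 1) : w 2 = 1 := by
  rw [two_eq (K := K)]
  exact val_C w hw h2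

namespace Level

variable (L : Level K F r)

lemma v_C {c : K} (hc : c ≠ 0) : L.v (algebraMap K[X] F (C c)) = 1 := by
  rw [IsScalarTower.algebraMap_apply K[X] (RatFunc K) F, L.v_algebraMap, vInf_poly (by simpa using hc)]
  simp

lemma v_C_le (c : K) : L.v (algebraMap K[X] F (C c)) ≤ 1 := by
  by_cases hc : c = 0
  · simp [hc]
  · exact (L.v_C hc).le

lemma x_ne : L.x ≠ 0 := by
  intro h
  have := L.v_x
  exact absurd this (by simp [h, exp_ne_zero.symm])

lemma v_f (h2 : (2 : K) ≠ 0) : L.v L.f = exp (1 : ℤ) := by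
  have h2' : L.v 2 = 1 := by rw [two_eq (K := K)]; exact L.v_C h2
  have h1 : L.v (L.x ^ 2 + 1) = exp (2 : ℤ) := by
    have hx : L.v (L.x ^ 2) = exp (2 : ℤ) := by rw [map_pow, L.v_x, ← exp_nsmul]; rfl
    rw [Valuation.map_add_eq_of_lt_left, hx]
    rw [hx, map_one, ← exp_zero, exp_lt_exp]; norm_num
  rw [f, map_div₀, map_mul, h1, h2', L.v_x, one_mul, ← exp_sub]; norm_num

lemma fact (h2 : (2 : K) ≠ 0) : Fact (∀ z : F, z ^ 2 ≠ L.f + 0 * z) := ⟨nonsq L.v (L.v_f h2)⟩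

lemma f_ne (h2 : (2 : K) ≠ 0) : L.f ≠ 0 := by
  intro h
  have := L.v_f h2
  exact absurd this (by simp [h, exp_ne_zero.symm])

lemma good_f (h2 : (2 : K) ≠ 0) (w : Valuation F ℤᵐ⁰)
    (hw : ∀ p : K[X], w (algebraMap K[X] F p) ≤ 1)
    (hm : w (algebraMap K[X] F (mPoly K)) = 1) : w L.f = 1 ∧ w (L.x ^ 2 - 1) = 1 := by
  obtain ⟨h1, h4⟩ := L.good_x w hw hm
  have hp : w (L.x ^ 2 + 1) ≤ 1 := by
    refine (Valuation.map_add _ _ _).trans ?_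
    simp [h1]
  have hq : w (L.x ^ 2 - 1) ≤ 1 := by
    refine (Valuation.map_sub _ _ _).trans ?_
    simp [h1]
  have h5 : w (L.x ^ 2 + 1) * w (L.x ^ 2 - 1) = 1 := by
    rw [← map_mul, ← h4]; congr 1; ring
  have hp' : w (L.x ^ 2 + 1) = 1 := le_antisymm hp (h5.symm.le.trans (mul_le_of_le_one_right' hq))
  refine ⟨?_, by simpa [hp'] using h5⟩
  rw [f, map_div₀, map_mul, hp', h1, val_two h2 w hw]; simp

local notation "E" => QuadraticAlgebra F L.f 0

lemma algMap_E {A : Type} [CommRing A] [Algebra A F] (a : A) :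
    algebraMap A E a = algebraMap F E (algebraMap A F a) :=
  IsScalarTower.algebraMap_apply A F E a

variable [Fact (∀ z : F, z ^ 2 ≠ L.f + 0 * z)]

lemma step_D_v (h2 : (2 : K) ≠ 0) (z : E) :
    valE L.v (L.v_f h2) (quadD L.D z) * exp ((2 * r : ℕ) : ℤ) ≤ valE L.v (L.v_f h2) z := by
  have h2' : L.v 2 = 1 := by rw [two_eq (K := K)]; exact L.v_C h2
  have e : (exp ((2 * r : ℕ) : ℤ) : ℤᵐ⁰) = exp (r : ℤ) ^ 2 := by
    rw [← exp_nsmul]; congr 1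
  have hdf : L.v (L.D L.f / (2 * L.f)) * exp (r : ℤ) ≤ 1 := by
    have h := L.D_v L.f
    rw [map_div₀, map_mul, h2', one_mul, div_mul_eq_mul_div]
    exact div_le_one_of_le₀ h zero_le
  have h3 : L.v (L.D z.im + z.im * L.D L.f / (2 * L.f)) * exp (r : ℤ) ≤ L.v z.im := by
    refine (mul_le_mul_left (Valuation.map_add _ _ _) _).trans ?_
    rw [max_mul']
    refine max_le (L.D_v _) ?_
    rw [mul_div_assoc, map_mul, mul_assoc]
    exact mul_le_of_le_one_right' hdf
  rw [valE_eq, valE_eq, max_mul', e]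
  refine max_le_max ?_ ?_
  · rw [← mul_pow]
    exact pow_le_pow_left₀ zero_le (L.D_v _) 2
  · rw [mul_right_comm, ← mul_pow]
    exact mul_le_mul_left (pow_le_pow_left₀ zero_le h3 2) _

lemma step_good_x (h2 : (2 : K) ≠ 0) (w : Valuation E ℤᵐ⁰)
    (hw : ∀ p : K[X], w (algebraMap K[X] E p) ≤ 1)
    (hm : w (algebraMap K[X] E (mPoly K)) = 1) :
    w (ω : E) = 1 ∧ w ((ω : E) ^ 4 - 1) = 1 := by
  set w0 := w.comap (algebraMap F E) with hw0
  have hw' : ∀ p : K[X], w0 (algebraMap K[X] F p) ≤ 1 := fun p => by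
    rw [hw0, Valuation.comap_apply, ← algMap_E]; exact hw p
  have hm' : w0 (algebraMap K[X] F (mPoly K)) = 1 := by
    rw [hw0, Valuation.comap_apply, ← algMap_E]; exact hm
  obtain ⟨hf, h1⟩ := L.good_f h2 w0 hw' hm'
  obtain ⟨hx, -⟩ := L.good_x w0 hw' hm'
  have h2F : (2 : F) ≠ 0 := two_ne h2
  constructor
  · have := val_omega_sq w
    rw [← Valuation.comap_apply (algebraMap F E), ← hw0, hf] at this
    exact (pow_left_inj₀ zero_le zero_le two_ne_zero).1 (this.trans (one_pow 2).symm)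
  · have : (ω : E) ^ 4 - 1 = algebraMap F E ((L.x ^ 2 - 1) ^ 2 / (2 * L.x) ^ 2) := by
      rw [show (ω : E) ^ 4 = (ω * ω) * (ω * ω) by ring, omega_sq, ← map_mul,
        ← map_one (algebraMap F E), ← map_sub]
      congr 1
      have := L.x_ne
      rw [f]
      field_simp
      ring
    rw [this, ← Valuation.comap_apply (algebraMap F E), ← hw0, map_div₀, map_pow, map_pow, map_mul,
      h1, hx, val_two h2 w0 hw']
    simp

lemma step_tr_v (h2 : (2 : K) ≠ 0) (z : E) (k : ℤ)
    (h : valE L.v (L.v_f h2) z = exp (((2 * r : ℕ) : ℤ) * k)) : L.v z.re = exp (r * k) := by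
  rw [valE_eq] at h
  have e : (exp (((2 * r : ℕ) : ℤ) * k) : ℤᵐ⁰) = exp ((r : ℤ) * k) ^ 2 := by
    rw [← exp_nsmul]; congr 1; simp; ring
  rcases le_total (L.v z.im ^ 2 * exp (1 : ℤ)) (L.v z.re ^ 2) with h' | h'
  · rw [max_eq_left h', e] at h
    exact (pow_left_inj₀ zero_le zero_le two_ne_zero).1 h
  · exfalso
    rw [max_eq_right h', e] at h
    have h0 : L.v z.im ≠ 0 := by
      intro h0; rw [h0] at h; exact absurd h (by simp [exp_ne_zero.symm])
    have h1 := congrArg log h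
    rw [log_mul (pow_ne_zero _ h0) (by simp)] at h1
    simp only [log_pow, log_exp, nsmul_eq_mul] at h1
    push_cast at h1
    omega

end Level
end SepCode
end

section
open Polynomial WithZero QuadraticAlgebra

namespace SepCode
namespace Level

variable {K : Type} [Field K] {F : Type} [Field F] [Algebra K[X] F] [Algebra (RatFunc K) F]
  [IsScalarTower K[X] (RatFunc K) F] {r : ℕ} (L : Level K F r)

local notation "E" => QuadraticAlgebra F L.f 0

/-- The trace form of the quadratic extension. -/
noncomputable def stepTr : E →ₗ[RatFunc K] RatFunc K where
  toFun z := 2 * L.tr z.re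
  map_add' z w := by simp [mul_add]
  map_smul' c z := by simp; ring

lemma isIntegral_of_two_mul (h2 : (2 : K) ≠ 0) {z : RatFunc K} (h : IsIntegral K[X] (2 * z)) :
    IsIntegral K[X] z := by
  have := (two_inv_integral (F := RatFunc K) h2).mul h
  rwa [inv_mul_cancel_left₀ (two_ne h2)] at this

lemma isIntegral_two_mul {z : RatFunc K} (h : IsIntegral K[X] z) :
    IsIntegral K[X] (2 * z) := by
  rw [two_mul]; exact h.add h

variable [Fact (∀ z : F, z ^ 2 ≠ L.f + 0 * z)]

/-- The bound on the different passes to `F(√f)`: up to a square, `f` is a unit or a uniformizer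
at the place below `w`, and `δ` is multiplied by the root of this normalized radicand. -/
lemma step_dual [FiniteDimensional (RatFunc K) F] (h2 : (2 : K) ≠ 0) (w : Valuation E ℤᵐ⁰)
    (hw : ∀ p : K[X], w (algebraMap K[X] E p) ≤ 1) :
    ∃ δ : E, (∀ h : E, (∀ b : E, IsIntegral K[X] b → IsIntegral K[X] (L.stepTr (h * b))) →
        IsIntegral K[X] (δ * h)) ∧
      (w (algebraMap K[X] E (mPoly K)) = 1 → w δ = 1) ∧
      (w (algebraMap K[X] E (mPoly K)) < 1 → w (algebraMap K[X] E (mPoly K)) < w δ) := by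
  have := L.sep
  have h2F : (2 : F) ≠ 0 := two_ne h2
  have hi2 : IsIntegral K[X] (2⁻¹ : F) := two_inv_integral h2
  set w0 := w.comap (algebraMap F E) with hw0
  have hw0' : ∀ p, w0 p = w (algebraMap F E p) := fun p => rfl
  have hw' : ∀ p : K[X], w0 (algebraMap K[X] F p) ≤ 1 := fun p => by
    rw [hw0', ← algMap_E]; exact hw p
  obtain ⟨δ, hδ, hδ1, hδ2⟩ := L.dual w0 hw'
  obtain ⟨c, hc0, hc1, hc2, hc3⟩ := exists_sq_mul w0 (L.f_ne h2)
  obtain ⟨u, hu, hu1, huc⟩ := exists_unit_mul_isIntegral w0 hw' _ hc1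
  have hcf : IsIntegral K[X] ((u * c) ^ 2 * L.f) := by
    have := hu.mul huc
    rwa [show u * (u * (c ^ 2 * L.f)) = (u * c) ^ 2 * L.f by ring] at this
  have hwδ : w (⟨0, u * c * δ⟩ : E) ^ 2 = w0 (c ^ 2 * L.f) * w0 δ ^ 2 := by
    have e : (⟨0, u * c * δ⟩ : E) ^ 2 = algebraMap F E ((c ^ 2 * L.f) * (u * δ) ^ 2) := by
      rw [sq, QuadraticAlgebra.algebraMap_eq]
      ext
      · simp; ring
      · simp
    rw [← map_pow, e, ← hw0', map_mul, map_pow w0 (u * δ), map_mul w0 u, hu1, one_mul]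
  refine ⟨⟨0, u * c * δ⟩, fun h hh => ?_, fun hm => ?_, fun hm => ?_⟩
  · rw [isIntegral_quad h2F hi2]
    have hre : IsIntegral K[X] (δ * h.re) := hδ _ fun b hb => by
      have := hh (algebraMap F E b) (hb.algebraMap)
      refine isIntegral_of_two_mul h2 ?_
      simpa [stepTr, QuadraticAlgebra.algebraMap_eq, mul_comm] using this
    have him : IsIntegral K[X] (δ * (h.im * (u * c) * L.f)) := hδ _ fun b hb => by
      have := hh ⟨0, u * c * b⟩ ((isIntegral_quad h2F hi2 _).2 ⟨by simpa using isIntegral_zero, by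
        have e : (u * c * b) ^ 2 * L.f = b ^ 2 * ((u * c) ^ 2 * L.f) := by ring
        rw [e]
        exact (hb.pow 2).mul hcf⟩)
      refine isIntegral_of_two_mul h2 ?_
      change IsIntegral K[X] (2 * L.tr _) at this
      convert this using 3
      rw [re_mul]
      ring
    refine ⟨?_, ?_⟩
    · convert him using 1
      simp; ring
    · have e : ((⟨0, u * c * δ⟩ : E) * h).im ^ 2 * L.f = (δ * h.re) ^ 2 * ((u * c) ^ 2 * L.f) := by
        rw [im_mul]; ring
      rw [e]
      exact (hre.pow 2).mul hcf
  · rw [algMap_E, ← hw0'] at hm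
    have hf := (L.good_f h2 w0 hw' hm).1
    rw [hc3 hf, hδ1 hm] at hwδ
    exact (pow_left_inj₀ zero_le zero_le two_ne_zero).1 (by rw [hwδ]; simp)
  · rw [algMap_E, ← hw0'] at hm ⊢
    have h := hδ2 hm
    have hδ0 : 0 < w0 δ := lt_of_le_of_lt zero_le h
    have := hc2 (algebraMap K[X] F (mPoly K) / δ) (by rw [map_div₀]; exact (div_lt_one₀ hδ0).2 h)
    refine lt_of_pow_lt_pow_left₀ 2 zero_le ?_
    rw [hwδ]
    rw [map_div₀, div_pow, div_lt_iff₀ (pow_pos hδ0 2)] at this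
    exact this

/-- One step of the tower: adjoin a square root of `(x² + 1) / (2 x)`. -/
noncomputable def step (h2 : (2 : K) ≠ 0) (hr : 0 < r) :
    Level K (QuadraticAlgebra F L.f 0) (2 * r) where
  x := ω
  finrank_eq := by
    have := L.finrank_eq
    rw [← Module.finrank_mul_finrank (RatFunc K) F E, this, QuadraticAlgebra.finrank_eq_two, mul_comm]
  sep := by
    have := L.sep
    have := separable_quad (two_ne h2) (L.f_ne h2)
    exact Algebra.IsSeparable.trans (RatFunc K) F E
  v := valE L.v (L.v_f h2)
  v_algebraMap q := by
    rw [algMap_E, QuadraticAlgebra.algebraMap_eq, valE_eq, L.v_algebraMap]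
    simp [pow_mul, mul_comm 2 r]
  v_x := by
    rw [valE_eq]; simp
  v_res z w hw h := by
    obtain ⟨c, hc⟩ := valE_res L.v (L.v_f h2) (fun c => algebraMap K[X] F (Polynomial.C c))
      L.v_C_le L.v_res z w hw h
    exact ⟨c, by rwa [algMap_E]⟩
  v_int z hz hz0 := by
    obtain ⟨h1, h3⟩ := (isIntegral_quad (two_ne h2) (two_inv_integral h2) z).1 hz
    have e : norm z = z.re ^ 2 - z.im ^ 2 * L.f := by rw [norm_def]; ring
    change 1 ≤ L.v (norm z)
    refine L.v_int _ ?_ ?_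
    · rw [e]; exact (h1.pow 2).sub h3
    · intro h0
      apply hz0
      have : valE L.v (L.v_f h2) z = 0 := by change L.v (norm z) = 0; simp [h0]
      exact (Valuation.zero_iff _).1 this
  tr := L.stepTr
  tr_int z hz := by
    obtain ⟨h1, h3⟩ := (isIntegral_quad (two_ne h2) (two_inv_integral h2) z).1 hz
    exact isIntegral_two_mul (L.tr_int _ h1)
  tr_v z k h := by
    have := L.tr_v _ k (L.step_tr_v h2 z k h)
    change vInf K (2 * L.tr z.re) = _
    rw [map_mul, this, two_eq (K := K), vInf_poly (by simpa using h2)]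
    simp
  D := quadD L.D
  D_add := quadD_add L.D_add
  D_mul := quadD_mul L.D_add L.D_mul (two_ne h2) (L.f_ne h2)
  D_algebraMap p := by
    rw [algMap_E, quadD_algebraMap L.D_add, L.D_algebraMap, ← algMap_E]
  D_v := L.step_D_v h2
  good_x := L.step_good_x h2
  good_D w hw hm z hz := by
    have hw' : ∀ p : K[X], w.comap (algebraMap F E) (algebraMap K[X] F p) ≤ 1 := fun p => by
      rw [Valuation.comap_apply, ← algMap_E]; exact hw p
    have hm' : w.comap (algebraMap F E) (algebraMap K[X] F (mPoly K)) = 1 := by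
      rw [Valuation.comap_apply, ← algMap_E]; exact hm
    exact quadD_good w L.D_add L.D_mul (two_ne h2) (L.f_ne h2) (val_two h2 w hw)
      (L.good_f h2 _ hw' hm').1 (L.good_D _ hw' hm') z hz
  bad_D w hw hm z := by
    have hw' : ∀ p : K[X], w.comap (algebraMap F E) (algebraMap K[X] F p) ≤ 1 := fun p => by
      rw [Valuation.comap_apply, ← algMap_E]; exact hw p
    have hm' : w.comap (algebraMap F E) (algebraMap K[X] F (mPoly K)) < 1 := by
      rw [Valuation.comap_apply, ← algMap_E]; exact hm
    rw [algMap_E]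
    exact quadD_bad w L.D_add L.D_mul (two_ne h2) (L.f_ne h2) (val_two h2 w hw) _
      (L.bad_D _ hw' hm') z
  dual w hw := by
    have := Module.finite_of_finrank_pos (R := RatFunc K) (M := F) (by rw [L.finrank_eq]; exact hr)
    exact L.step_dual h2 w hw

end Level
end SepCode
end

/-! ### Rational points -/

section
open Polynomial WithZero QuadraticAlgebra

namespace SepCode

/-- Regularity over `T`: some polynomial without zeros in `T` clears the denominator of `z`. -/
def Reg {K : Type} [Field K] {F : Type} [Field F] [Algebra K[X] F] (T : Finset K) (z : F) : Prop :=
  ∃ u : K[X], (∀ α ∈ T, u.eval α ≠ 0) ∧ IsIntegral K[X] (algebraMap K[X] F u * z)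

section Reg

variable {K : Type} [Field K] {F : Type} [Field F] [Algebra K[X] F] {T : Finset K}

lemma Reg.of_isIntegral {z : F} (h : IsIntegral K[X] z) : Reg T z :=
  ⟨1, by simp, by simpa using h⟩

lemma Reg.add {z w : F} (hz : Reg T z) (hw : Reg T w) : Reg T (z + w) := by
  obtain ⟨u, hu, hz⟩ := hz
  obtain ⟨t, ht, hw⟩ := hw
  refine ⟨u * t, fun α h => by simp [hu α h, ht α h], ?_⟩
  have e : algebraMap K[X] F (u * t) * (z + w) = algebraMap K[X] F t * (algebraMap K[X] F u * z)
      + algebraMap K[X] F u * (algebraMap K[X] F t * w) := by rw [map_mul]; ring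
  rw [e]
  exact (isIntegral_algebraMap.mul hz).add (isIntegral_algebraMap.mul hw)

lemma Reg.mul {z w : F} (hz : Reg T z) (hw : Reg T w) : Reg T (z * w) := by
  obtain ⟨u, hu, hz⟩ := hz
  obtain ⟨t, ht, hw⟩ := hw
  refine ⟨u * t, fun α h => by simp [hu α h, ht α h], ?_⟩
  have e : algebraMap K[X] F (u * t) * (z * w) = (algebraMap K[X] F u * z)
      * (algebraMap K[X] F t * w) := by rw [map_mul]; ring
  rw [e]
  exact hz.mul hw

lemma Reg.poly (p : K[X]) : Reg T (algebraMap K[X] F p) :=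
  .of_isIntegral isIntegral_algebraMap

lemma Reg.one : Reg T (1 : F) := .of_isIntegral isIntegral_one

lemma Reg.zero : Reg T (0 : F) := .of_isIntegral isIntegral_zero

lemma Reg.neg {z : F} (hz : Reg T z) : Reg T (-z) := by
  have := (Reg.of_isIntegral (T := T) (z := (-1 : F)) isIntegral_one.neg).mul hz
  simpa using this

lemma Reg.of_sq {z : F} (hz : Reg T (z ^ 2)) : Reg T z := by
  obtain ⟨u, hu, hz⟩ := hz
  refine ⟨u, hu, IsIntegral.of_pow two_pos ?_⟩
  have e : (algebraMap K[X] F u * z) ^ 2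
    = algebraMap K[X] F u * (algebraMap K[X] F u * z ^ 2) := by ring
  rw [e]
  exact isIntegral_algebraMap.mul hz

end Reg

/-- Rational points of a level of the tower lying over `T`, given by their evaluation maps on the
ring of functions regular over `T` (with junk values elsewhere); `pt` is the `s`-coordinate. All
points over `T` are rational. -/
structure Points {K : Type} [Field K] {F : Type} [Field F] [Algebra K[X] F]
    (T : Finset K) (x : F) (r : ℕ) where
  ι : Type
  fintype : Fintype ι
  pt : ι → K
  χ : ι → F → K
  pt_mem : ∀ i, pt i ∈ T
  χ_add : ∀ i z w, Reg T z → Reg T w → χ i (z + w) = χ i z + χ i w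
  χ_mul : ∀ i z w, Reg T z → Reg T w → χ i (z * w) = χ i z * χ i w
  χ_algebraMap : ∀ i (p : K[X]), χ i (algebraMap K[X] F p) = p.eval (pt i)
  x_reg : Reg T x
  x_mem : ∀ i, χ i x ∈ T
  unit : ∀ z, Reg T z → (∀ i, χ i z ≠ 0) → Reg T z⁻¹
  sep : ∀ i j, i ≠ j → ∃ z, IsIntegral K[X] z ∧ χ i z ≠ χ j z
  card : ∀ α ∈ T, Nat.card {i // pt i = α} = r

/-- The base of the tower: the points of the affine line in `T`. -/
noncomputable def basePoints {K : Type} [Field K] (T : Finset K) :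
    Points T (RatFunc.X : RatFunc K) 1 := by
  have key : ∀ z : RatFunc K, Reg T z → ∀ α ∈ T, z.denom.eval₂ (RingHom.id K) α ≠ 0 := by
    rintro z ⟨u, hu, hz⟩ α hα h
    obtain ⟨p, hp⟩ := isIntegral_ratFunc hz
    have hu0 : u ≠ 0 := by rintro rfl; simpa using hu α hα
    have e : z = algebraMap K[X] (RatFunc K) p / algebraMap K[X] (RatFunc K) u := by
      rw [← hp, mul_div_cancel_left₀ _ (ι_ne hu0)]
    have h1 : z.denom ∣ u := by rw [e]; exact RatFunc.denom_div_dvd p u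
    obtain ⟨q, rfl⟩ := h1
    refine hu α hα ?_
    rw [← eval₂_id, eval₂_mul, h, zero_mul]
  exact {
    ι := T
    fintype := inferInstance
    pt i := i
    χ i z := RatFunc.eval (RingHom.id K) (i : K) z
    pt_mem i := i.2
    χ_add i z w hz hw := RatFunc.eval_add (RingHom.id K) _ (key z hz i i.2) (key w hw i i.2)
    χ_mul i z w hz hw := RatFunc.eval_mul (RingHom.id K) _ (key z hz i i.2) (key w hw i i.2)
    χ_algebraMap i p := by simp [RatFunc.eval_algebraMap]
    x_reg := by rw [← RatFunc.algebraMap_X]; exact Reg.poly _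
    x_mem i := by simp
    unit z hz hne := by
      obtain ⟨u, hu, hz'⟩ := id hz
      obtain ⟨p, hp⟩ := isIntegral_ratFunc hz'
      by_cases hz0 : z = 0
      · rw [hz0, inv_zero]; exact Reg.zero
      refine ⟨p, fun α hα h => ?_, ?_⟩
      · have h1 := congrArg (RatFunc.eval (RingHom.id K) α) hp
        rw [RatFunc.eval_mul (RingHom.id K) _ (key _ (Reg.poly u) α hα) (key z hz α hα)] at h1
        simp only [RatFunc.eval_algebraMap, Algebra.algebraMap_self, eval₂_eq_eval_map] at h1
        simp only [Polynomial.map_id, RingHom.id_apply, h, mul_eq_zero] at h1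
        exact h1.elim (hu α hα) (hne ⟨α, hα⟩)
      · rw [← hp, mul_inv_cancel_right₀ hz0]
        exact isIntegral_algebraMap
    sep i j hij := ⟨RatFunc.X, by rw [← RatFunc.algebraMap_X]; exact isIntegral_algebraMap, by
      simpa only [RatFunc.eval_X, ne_eq, Subtype.coe_inj] using hij⟩
    card α hα := by
      have : Unique {i : T // (i : K) = α} :=
        ⟨⟨⟨⟨α, hα⟩, rfl⟩⟩, fun i => Subtype.ext (Subtype.ext i.2)⟩
      exact Nat.card_unique }

end SepCode
end

section
open Polynomial WithZero QuadraticAlgebra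


namespace SepCode

section
variable {K : Type} [Field K] {F : Type} [Field F] [Algebra K[X] F] [Algebra (RatFunc K) F]
  [IsScalarTower K[X] (RatFunc K) F] {T : Finset K} {f : F}

/-- Regularity in a quadratic extension whose radicand is a unit over `T`. -/
lemma reg_quad [Fact (∀ z : F, z ^ 2 ≠ f + 0 * z)] (h2 : (2 : K) ≠ 0) (hf : Reg T f)
    (hf' : Reg T f⁻¹) (hf0 : f ≠ 0)
    (z : QuadraticAlgebra F f 0) : Reg T z ↔ Reg T z.re ∧ Reg T z.im := by
  have hi := isIntegral_quad (A := K[X]) (f := f) (two_ne h2) (two_inv_integral h2)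
  have hre : ∀ (u : K[X]) (z : QuadraticAlgebra F f 0),
      (algebraMap K[X] (QuadraticAlgebra F f 0) u * z).re = algebraMap K[X] F u * z.re := by
    intro u z
    rw [IsScalarTower.algebraMap_apply K[X] F (QuadraticAlgebra F f 0),
      QuadraticAlgebra.algebraMap_eq]
    simp
  have him : ∀ (u : K[X]) (z : QuadraticAlgebra F f 0),
      (algebraMap K[X] (QuadraticAlgebra F f 0) u * z).im = algebraMap K[X] F u * z.im := by
    intro u z
    rw [IsScalarTower.algebraMap_apply K[X] F (QuadraticAlgebra F f 0),
      QuadraticAlgebra.algebraMap_eq]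
    simp
  constructor
  · rintro ⟨u, hu, hz⟩
    rw [hi, hre, him] at hz
    refine ⟨⟨u, hu, hz.1⟩, Reg.of_sq ?_⟩
    have h1 : Reg T (z.im ^ 2 * f) :=
      ⟨u ^ 2, fun α hα => by simp [hu α hα], by rw [map_pow, ← mul_assoc, ← mul_pow]; exact hz.2⟩
    have := h1.mul hf'
    rwa [mul_inv_cancel_right₀ hf0] at this
  · rintro ⟨⟨u, hu, h1⟩, t, ht, h3⟩
    obtain ⟨y, hy, h4⟩ := hf
    refine ⟨u * t * y, fun α hα => by simp [hu α hα, ht α hα, hy α hα], ?_⟩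
    rw [hi, hre, him]
    constructor
    · have e : algebraMap K[X] F (u * t * y) * z.re
          = algebraMap K[X] F (t * y) * (algebraMap K[X] F u * z.re) := by simp only [map_mul]; ring
      rw [e]
      exact isIntegral_algebraMap.mul h1
    · have e : (algebraMap K[X] F (u * t * y) * z.im) ^ 2 * f = algebraMap K[X] F (u ^ 2 * y)
          * ((algebraMap K[X] F t * z.im) ^ 2 * (algebraMap K[X] F y * f)) := by
        simp only [map_mul, map_pow]; ring
      rw [e]
      exact isIntegral_algebraMap.mul ((h3.pow 2).mul h4)

end

namespace Points

variable {K : Type} [Field K] {F : Type} [Field F] [Algebra K[X] F] [Algebra (RatFunc K) F]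
  [IsScalarTower K[X] (RatFunc K) F] {T : Finset K} {r : ℕ} {x : F} (P : Points T x r)

lemma χ_C (i : P.ι) (c : K) : P.χ i (algebraMap K[X] F (Polynomial.C c)) = c := by
  rw [P.χ_algebraMap]; simp

lemma χ_one (i : P.ι) : P.χ i 1 = 1 := by
  rw [← map_one (algebraMap K[X] F), P.χ_algebraMap]; simp

lemma χ_zero (i : P.ι) : P.χ i 0 = 0 := by
  rw [← map_zero (algebraMap K[X] F), P.χ_algebraMap]; simp

lemma χ_two (i : P.ι) : P.χ i 2 = 2 := by
  rw [two_eq (K := K), P.χ_C]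

lemma χ_neg (i : P.ι) {z : F} (hz : Reg T z) : P.χ i (-z) = - P.χ i z := by
  have := P.χ_add i z (-z) hz hz.neg
  rw [add_neg_cancel, χ_zero] at this
  linear_combination -this

end Points

/-- `T` is closed under the backward correspondence `γ² = (α² + 1) / (2 α)` of the tower and avoids
its ramification locus. -/
structure IsGoodSet {K : Type} [Field K] (T : Finset K) : Prop where
  ne_zero : ∀ α ∈ T, α ≠ 0
  pow_ne : ∀ α ∈ T, α ^ 4 ≠ 1
  root : ∀ α ∈ T, ∃ γ ∈ T, -γ ∈ T ∧ γ ^ 2 * (2 * α) = α ^ 2 + 1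

section step
variable {K : Type} [Field K] {F : Type} [Field F] [Algebra K[X] F] [Algebra (RatFunc K) F]
  [IsScalarTower K[X] (RatFunc K) F] {T : Finset K} {r : ℕ} (L : Level K F r) (P : Points T L.x r)

lemma IsGoodSet.sq_ne (hT : IsGoodSet T) {α : K} (h : α ∈ T) : α ^ 2 + 1 ≠ 0 := by
  intro h0
  apply hT.pow_ne α h
  linear_combination (α ^ 2 - 1) * h0

lemma reg_f (h2 : (2 : K) ≠ 0) (hT : IsGoodSet T) :
    Reg T L.f ∧ Reg T L.f⁻¹ ∧ ∀ i, P.χ i L.f * (2 * P.χ i L.x) = P.χ i L.x ^ 2 + 1 := by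
  have h2F : (2 : F) ≠ 0 := two_ne h2
  have hx0 := L.x_ne
  have hx := P.x_reg
  have r2 : Reg T (2 : F) := by rw [two_eq (K := K)]; exact Reg.poly _
  have hxi : Reg T (2 * L.x)⁻¹ := P.unit _ (r2.mul hx) fun i => by
    rw [P.χ_mul i _ _ r2 hx, P.χ_two]
    exact mul_ne_zero h2 (hT.ne_zero _ (P.x_mem i))
  have hx2 : Reg T (L.x ^ 2 + 1) := by rw [sq]; exact (hx.mul hx).add Reg.one
  have hf : Reg T L.f := by
    rw [Level.f, div_eq_mul_inv]
    exact hx2.mul hxi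
  have hχ : ∀ i, P.χ i L.f * (2 * P.χ i L.x) = P.χ i L.x ^ 2 + 1 := by
    intro i
    rw [← P.χ_two i, ← P.χ_mul i _ _ r2 hx, ← P.χ_mul i _ _ hf (r2.mul hx), sq,
      ← P.χ_mul i _ _ hx hx, ← P.χ_one i, ← P.χ_add i _ _ (hx.mul hx) Reg.one]
    congr 1
    rw [Level.f]
    field_simp
  refine ⟨hf, P.unit _ hf fun i h0 => ?_, hχ⟩
  have := hχ i
  rw [h0, zero_mul] at this
  exact hT.sq_ne (P.x_mem i) this.symm

/-- The sign attached to a boolean, labelling the two points above a given one. -/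
def sgn (K : Type) [Field K] (b : Bool) : K := if b then 1 else -1

lemma sgn_sq (b : Bool) : sgn K b ^ 2 = 1 := by cases b <;> simp [sgn]

/-- The two points above each point, with `y`-coordinates `± γ`. -/
noncomputable def Points.step [Fact (∀ z : F, z ^ 2 ≠ L.f + 0 * z)]
    (h2 : (2 : K) ≠ 0) (hT : IsGoodSet T) :
    Points T (ω : QuadraticAlgebra F L.f 0) (2 * r) := by
  have hroot : ∀ i, ∃ γ ∈ T, -γ ∈ T ∧ γ ^ 2 * (2 * P.χ i L.x) = P.χ i L.x ^ 2 + 1 :=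
    fun i => hT.root _ (P.x_mem i)
  choose γ hγ hγ' hγx using hroot
  have hf := reg_f L P h2 hT
  have hreg := reg_quad (T := T) h2 hf.1 hf.2.1 (L.f_ne h2)
  have hγ2 : ∀ i, γ i ^ 2 = P.χ i L.f := fun i =>
    mul_right_cancel₀ (mul_ne_zero h2 (hT.ne_zero _ (P.x_mem i)))
      ((hγx i).trans (hf.2.2 i).symm)
  have hs : ∀ i (b : Bool), (sgn K b * γ i) ^ 2 = P.χ i L.f := fun i b => by
    rw [mul_pow, sgn_sq, one_mul, hγ2]
  have hf1 := hf.1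
  have hre : ∀ z w : QuadraticAlgebra F L.f 0, (z * w).re = z.re * w.re + L.f * (z.im * w.im) := by
    intro z w; rw [re_mul]; ring
  have him : ∀ z w : QuadraticAlgebra F L.f 0, (z * w).im = z.re * w.im + z.im * w.re := by
    intro z w; rw [im_mul]; ring
  exact {
    ι := P.ι × Bool
    fintype := have := P.fintype; inferInstance
    pt i := P.pt i.1
    χ i z := P.χ i.1 z.re + (sgn K i.2 * γ i.1) * P.χ i.1 z.im
    pt_mem i := P.pt_mem i.1
    χ_add i z w hz hw := by
      obtain ⟨z1, z2⟩ := (hreg z).1 hz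
      obtain ⟨w1, w2⟩ := (hreg w).1 hw
      rw [re_add, im_add, P.χ_add _ _ _ z1 w1, P.χ_add _ _ _ z2 w2]
      ring
    χ_mul i z w hz hw := by
      obtain ⟨z1, z2⟩ := (hreg z).1 hz
      obtain ⟨w1, w2⟩ := (hreg w).1 hw
      rw [hre, him, P.χ_add _ _ _ (z1.mul w1) (hf1.mul (z2.mul w2)),
        P.χ_add _ _ _ (z1.mul w2) (z2.mul w1), P.χ_mul _ _ _ z1 w1, P.χ_mul _ _ _ z1 w2,
        P.χ_mul _ _ _ z2 w1, P.χ_mul _ _ _ hf1 (z2.mul w2), P.χ_mul _ _ _ z2 w2]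
      linear_combination (- P.χ i.1 z.im * P.χ i.1 w.im) * hs i.1 i.2
    χ_algebraMap i p := by
      rw [L.algMap_E, QuadraticAlgebra.algebraMap_eq, P.χ_algebraMap, P.χ_zero]
      simp
    x_reg := (hreg _).2 ⟨by simpa using Reg.zero, by simpa using Reg.one⟩
    x_mem := by
      rintro ⟨i, b⟩
      change P.χ i 0 + (sgn K b * γ i) * P.χ i 1 ∈ T
      rw [P.χ_zero, P.χ_one]
      cases b
      · simpa [sgn] using hγ' i
      · simpa [sgn] using hγ i
    unit z hz hne := by
      obtain ⟨z1, z2⟩ := (hreg z).1 hz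
      have hn : Reg T (z.re * z.re + -(L.f * (z.im * z.im))) :=
        (z1.mul z1).add (hf1.mul (z2.mul z2)).neg
      have hni : Reg T (z.re * z.re + -(L.f * (z.im * z.im)))⁻¹ := P.unit _ hn fun i h0 => by
        rw [P.χ_add _ _ _ (z1.mul z1) (hf1.mul (z2.mul z2)).neg, P.χ_neg _ (hf1.mul (z2.mul z2)),
          P.χ_mul _ _ _ z1 z1, P.χ_mul _ _ _ hf1 (z2.mul z2), P.χ_mul _ _ _ z2 z2] at h0
        refine mul_ne_zero (hne (i, true)) (hne (i, false)) ?_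
        simp only [sgn]
        simp only [if_true]
        rw [if_neg (by simp)]
        linear_combination h0 - P.χ i z.im ^ 2 * hγ2 i
      have e : z⁻¹ = algebraMap F _ (z.re * z.re + -(L.f * (z.im * z.im)))⁻¹ * star z := by
        by_cases hz0 : z = 0
        · simp [hz0]
        apply inv_eq_of_mul_eq_one_right
        have e1 : z * star z = algebraMap F _ (z.re * z.re + -(L.f * (z.im * z.im))) := by
          rw [QuadraticAlgebra.algebraMap_eq]
          ext
          · simp; ring
          · simp; ring
        have hne0 : z.re * z.re + -(L.f * (z.im * z.im)) ≠ 0 := by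
          intro h0
          rw [h0, map_zero] at e1
          rcases mul_eq_zero.1 e1 with h | h
          · exact hz0 h
          · exact hz0 (by simpa using h)
        rw [mul_left_comm, e1, ← map_mul, inv_mul_cancel₀ hne0, map_one]
      rw [e, hreg, QuadraticAlgebra.algebraMap_eq]
      constructor
      · rw [hre]
        simpa using hni.mul z1
      · rw [him]
        simpa using (hni.mul z2).neg
    sep := by
      rintro ⟨i, b⟩ ⟨j, c⟩ hij
      by_cases h : i = j
      · subst h
        obtain ⟨u, hu, huf⟩ := hf1
        refine ⟨⟨0, algebraMap K[X] F u⟩,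
          (isIntegral_quad (two_ne h2) (two_inv_integral h2) _).2 ⟨isIntegral_zero, ?_⟩, ?_⟩
        · rw [sq, mul_assoc]
          exact isIntegral_algebraMap.mul huf
        · simp only [P.χ_zero, P.χ_algebraMap, zero_add]
          have hu' := hu _ (P.pt_mem i)
          have hg := hT.ne_zero _ (hγ i)
          intro h
          have h := mul_right_cancel₀ hg (mul_right_cancel₀ hu' h)
          have hbc : b ≠ c := fun h => hij (by rw [h])
          cases b <;> cases c <;> simp [sgn] at h hbc
          · exact h2 (by linear_combination -h)
          · exact h2 (by linear_combination h)
      · obtain ⟨z, hz, hne⟩ := P.sep i j h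
        refine ⟨algebraMap F _ z, hz.algebraMap, ?_⟩
        simpa [QuadraticAlgebra.algebraMap_eq, P.χ_zero] using hne
    card α hα := by
      have := P.card α hα
      let e : {i : P.ι × Bool // P.pt i.1 = α} ≃ {i : P.ι // P.pt i = α} × Bool :=
        ⟨fun i => (⟨i.1.1, i.2⟩, i.1.2), fun i => ⟨(i.1.1, i.2), i.1.2⟩, fun _ => rfl, fun _ => rfl⟩
      rw [Nat.card_congr e, Nat.card_prod, this]
      simp [mul_comm] }

end step
end SepCode
end

/-! ### The affine curve with its pole order at infinity -/

section
open Polynomial WithZero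


namespace SepCode

/-- The coordinate ring `B` of an affine curve with one place at infinity, together with what the
coding argument needs: the pole order `ρ` at infinity (`ρ 0 = 0`), a coordinate `s` of pole order
`r`, near-symmetry of the Weierstrass semigroup at infinity, the derivation `Δ = (s⁵ - s) d/ds`, and
rational points, `r` of them above each `α ∈ T`. -/
structure CurveData (K : Type) [Field K] (T : Finset K) (r : ℕ) (B : Type) [CommRing B]
    [Algebra K B] where
  s : B
  ρ : B → ℕ
  ρ_zero : ρ 0 = 0
  ρ_mul : ∀ z w, z ≠ 0 → w ≠ 0 → ρ (z * w) = ρ z + ρ w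
  ρ_add : ∀ z w, ρ (z + w) ≤ max (ρ z) (ρ w)
  ρ_res : ∀ z w, z ≠ 0 → w ≠ 0 → ρ z = ρ w → ∃ c : K, z - c • w = 0 ∨ ρ (z - c • w) < ρ z
  ρ_s : ρ s = r
  ρ_C : ∀ c : K, ρ (algebraMap K B c) = 0
  sg : ∀ j : ℤ, (∃ z, z ≠ 0 ∧ (ρ z : ℤ) = j) ∨ (∃ z, z ≠ 0 ∧ (ρ z : ℤ) = 4 * r - j)
  Δ : Derivation K B B
  Δ_s : Δ s = s ^ 5 - s
  Δ_ρ : ∀ z, ρ (Δ z) ≤ ρ z + 4 * r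
  ι : Type
  fintype : Fintype ι
  χ : ι → B →ₐ[K] K
  χ_inj : Function.Injective χ
  χ_s : ∀ i, χ i s ∈ T
  card : ∀ α ∈ T, Nat.card {i // χ i s = α} = r

namespace Level

variable {K : Type} [Field K] {F : Type} [Field F] [Algebra K[X] F] [Algebra (RatFunc K) F]
  [IsScalarTower K[X] (RatFunc K) F] {r : ℕ} (L : Level K F r)

/-- Pole order at infinity, for integral elements. -/
noncomputable def ord (z : F) : ℕ := (log (L.v z)).toNat

lemma v_eq {z : F} (hz : IsIntegral K[X] z) (h0 : z ≠ 0) : L.v z = exp (L.ord z : ℤ) := by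
  have h1 := L.v_int z hz h0
  have h2 : L.v z ≠ 0 := (Valuation.ne_zero_iff _).2 h0
  have h3 : 0 ≤ log (L.v z) := by
    rw [← exp_zero, ← exp_log h2, exp_le_exp] at h1
    exact h1
  rw [ord, Int.toNat_of_nonneg h3, exp_log h2]

lemma v_poly {p : K[X]} (hp : p ≠ 0) : L.v (algebraMap K[X] F p) = exp ((r * p.natDegree : ℕ) : ℤ) := by
  rw [IsScalarTower.algebraMap_apply K[X] (RatFunc K) F, L.v_algebraMap, vInf_poly hp, ← exp_nsmul]
  congr 1

lemma poly_ne {p : K[X]} (hp : p ≠ 0) : algebraMap K[X] F p ≠ 0 := by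
  rw [IsScalarTower.algebraMap_apply K[X] (RatFunc K) F]
  simpa using hp

lemma ord_poly {p : K[X]} (hp : p ≠ 0) : L.ord (algebraMap K[X] F p) = r * p.natDegree := by
  have := L.v_eq isIntegral_algebraMap (poly_ne (F := F) hp)
  rw [L.v_poly hp, exp_inj] at this
  exact_mod_cast this.symm

lemma ord_mul {z w : F} (hz : IsIntegral K[X] z) (h0 : z ≠ 0) (hw : IsIntegral K[X] w)
    (h0' : w ≠ 0) : L.ord (z * w) = L.ord z + L.ord w := by
  have := L.v_eq (hz.mul hw) (mul_ne_zero h0 h0')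
  rw [map_mul, L.v_eq hz h0, L.v_eq hw h0', ← exp_add, exp_inj] at this
  exact_mod_cast this.symm

lemma ord_zero : L.ord 0 = 0 := by simp [ord]

lemma ord_le {z : F} (hz : IsIntegral K[X] z) (n : ℕ) : L.ord z ≤ n ↔ L.v z ≤ exp (n : ℤ) := by
  by_cases h0 : z = 0
  · simp [h0, ord_zero]
  · rw [L.v_eq hz h0, exp_le_exp]; simp

variable [FiniteDimensional (RatFunc K) F]

/-- Every residue class modulo `r` contains a pole order. -/
lemma exists_class (j : ℕ) :
    ∃ z : F, IsIntegral K[X] z ∧ z ≠ 0 ∧ L.ord z % r = j % r := by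
  have halg : Algebra.IsAlgebraic K[X] F :=
    (IsFractionRing.comap_isAlgebraic_iff (K := RatFunc K)).2 inferInstance
  obtain ⟨u, hu0, hu⟩ := (halg.isAlgebraic (L.x ^ j)).exists_integral_multiple
  rw [Algebra.smul_def] at hu
  have hne : algebraMap K[X] F u * L.x ^ j ≠ 0 := mul_ne_zero (poly_ne hu0) (pow_ne_zero _ L.x_ne)
  refine ⟨_, hu, hne, ?_⟩
  have := L.v_eq hu hne
  rw [map_mul, L.v_poly hu0, map_pow, L.v_x, ← exp_nsmul, ← exp_add, exp_inj] at this
  have h : r * u.natDegree + j = L.ord (algebraMap K[X] F u * L.x ^ j) := by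
    simp only [nsmul_eq_mul, mul_one] at this
    exact_mod_cast this
  rw [← h]; simp

/-- An integral element of minimal pole order in each class modulo `r`. -/
lemma exists_apery (j : ℕ) :
    ∃ b : F, IsIntegral K[X] b ∧ b ≠ 0 ∧ L.ord b % r = j % r ∧
      ∀ z : F, IsIntegral K[X] z → z ≠ 0 → L.ord z % r = j % r → L.ord b ≤ L.ord z := by
  classical
  have h : ∃ n, ∃ z : F, IsIntegral K[X] z ∧ z ≠ 0 ∧ L.ord z % r = j % r ∧ L.ord z = n := by
    obtain ⟨z, h1, h2, h3⟩ := L.exists_class j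
    exact ⟨_, z, h1, h2, h3, rfl⟩
  obtain ⟨b, h1, h2, h3, h4⟩ := Nat.find_spec h
  exact ⟨b, h1, h2, h3, fun z hz hz0 hzj => h4 ▸ Nat.find_min' h ⟨z, hz, hz0, hzj, rfl⟩⟩

/-- Elements of the inverse different become integral after multiplication by `s⁵ - s`. -/
lemma m_mul_integral (h : F)
    (hh : ∀ b : F, IsIntegral K[X] b → IsIntegral K[X] (L.tr (h * b))) :
    IsIntegral K[X] (algebraMap K[X] F (mPoly K) * h) := by
  have := L.sep
  refine isIntegral_of_val _ fun w hw => ?_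
  obtain ⟨δ, hδ, h1, h2⟩ := L.dual w hw
  have h3 := val_le_one_of_isIntegral w hw (hδ h hh)
  rw [map_mul] at h3 ⊢
  refine le_trans (mul_le_mul_left ?_ _) h3
  rcases (hw (mPoly K)).lt_or_eq with hm | hm
  · exact (h2 hm).le
  · rw [hm, h1 hm]

lemma m_mul_D_integral (z : F) (hz : IsIntegral K[X] z) :
    IsIntegral K[X] (algebraMap K[X] F (mPoly K) * L.D z) := by
  have := L.sep
  refine isIntegral_of_val _ fun w hw => ?_
  have h3 := val_le_one_of_isIntegral w hw hz
  rcases (hw (mPoly K)).lt_or_eq with hm | hm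
  · exact (L.bad_D w hw hm z).trans h3
  · rw [map_mul, hm, one_mul]
    exact L.good_D w hw hm z h3

lemma mPoly_natDegree : (mPoly K).natDegree = 5 ∧ mPoly K ≠ 0 := by
  have h : (mPoly K).natDegree = 5 := by
    rw [mPoly]; compute_degree!
  refine ⟨h, fun h0 => ?_⟩
  rw [h0] at h; simp at h

/-- Near-symmetry of the semigroup of pole orders: a gap `j` forces `4 r - j` to be a pole order.
The elements realising it are `(s⁵ - s) hᵢ` with `hᵢ` the trace-dual basis of the minimal elements
in each residue class. -/
lemma semigroup (hr : 0 < r) (j : ℤ) :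
    (∃ z : F, IsIntegral K[X] z ∧ z ≠ 0 ∧ (L.ord z : ℤ) = j) ∨
    (∃ z : F, IsIntegral K[X] z ∧ z ≠ 0 ∧ (L.ord z : ℤ) = 4 * r - j) := by
  choose b hb hb0 hbj hbmin using L.exists_apery
  have hrz : (0 : ℤ) < r := by exact_mod_cast hr
  -- multiplying by powers of `s` raises the order by multiples of `r`
  have shift : ∀ z : F, IsIntegral K[X] z → z ≠ 0 → ∀ k : ℤ, (L.ord z : ℤ) ≤ k →
      (r : ℤ) ∣ k - L.ord z → ∃ z' : F, IsIntegral K[X] z' ∧ z' ≠ 0 ∧ (L.ord z' : ℤ) = k := by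
    rintro z hz hz0 k hk ⟨t, ht⟩
    have ht0 : 0 ≤ t := by
      by_contra hneg
      push Not at hneg
      nlinarith
    obtain ⟨n, rfl⟩ := Int.eq_ofNat_of_zero_le ht0
    have hX : (X ^ n : K[X]) ≠ 0 := pow_ne_zero _ X_ne_zero
    refine ⟨algebraMap K[X] F (X ^ n) * z, isIntegral_algebraMap.mul hz,
      mul_ne_zero (poly_ne hX) hz0, ?_⟩
    rw [L.ord_mul isIntegral_algebraMap (poly_ne hX) hz hz0, L.ord_poly hX]
    simp only [natDegree_X_pow]
    push_cast
    linarith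
  -- the index of the class of `j`
  obtain ⟨c, hc⟩ : ∃ c : Fin r, (j % r) = (c : ℕ) := by
    have h1 := Int.emod_nonneg j hrz.ne'
    have h2 := Int.emod_lt_of_pos j hrz
    exact ⟨⟨(j % r).toNat, by omega⟩, by simp [h1]⟩
  have hcj : (r : ℤ) ∣ j - L.ord (b c) := by
    apply Int.dvd_of_emod_eq_zero
    rw [← Int.emod_emod_of_dvd _ dvd_rfl, Int.sub_emod, hc]
    have := hbj c
    rw [Nat.mod_eq_of_lt c.2] at this
    have h2 : (L.ord (b c) : ℤ) % r = (c : ℕ) := by exact_mod_cast this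
    rw [h2]; simp
  rcases le_or_gt (L.ord (b c) : ℤ) j with hle | hlt
  · exact .inl (shift _ (hb c) (hb0 c) j hle hcj)
  right
  -- the nonvanishing of some trace
  have hclass : ∀ h : F, h ≠ 0 → ∃ i : Fin r, ∃ k : ℤ, L.v h = exp (r * k - L.ord (b i)) ∧
      vInf K (L.tr (h * b i)) = exp k := by
    intro h h0
    have hv : L.v h ≠ 0 := (Valuation.ne_zero_iff _).2 h0
    set e := log (L.v h) with he
    have h1 := Int.emod_nonneg (-e) hrz.ne'
    have h2 := Int.emod_lt_of_pos (-e) hrz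
    let i : Fin r := ⟨((-e) % r).toNat, by omega⟩
    have hi : ((i : ℕ) : ℤ) = (-e) % r := by simp [i, h1]
    have h3 : (L.ord (b i) : ℤ) % r = (i : ℕ) := by
      have := hbj i
      rw [Nat.mod_eq_of_lt i.2] at this
      exact_mod_cast this
    have h4 : (r : ℤ) ∣ e + L.ord (b i) := by
      apply Int.dvd_of_emod_eq_zero
      rw [show e + (L.ord (b i) : ℤ) = L.ord (b i) - (-e) by ring, Int.sub_emod, h3, hi]
      simp
    obtain ⟨k, hk⟩ := h4
    have hvh : L.v h = exp (r * k - L.ord (b i)) := by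
      rw [← exp_log hv, ← he]; congr 1; linarith
    refine ⟨i, k, hvh, L.tr_v _ k ?_⟩
    rw [map_mul, hvh, L.v_eq (hb i) (hb0 i), ← exp_add]; congr 1; ring
  let Φ : F →ₗ[RatFunc K] (Fin r → RatFunc K) :=
    LinearMap.pi fun i => L.tr ∘ₗ LinearMap.mulRight (RatFunc K) (b i)
  have hΦ : ∀ h i, Φ h i = L.tr (h * b i) := fun h i => rfl
  have hinj : Function.Injective Φ := by
    rw [← LinearMap.ker_eq_bot, LinearMap.ker_eq_bot']
    intro h hh
    by_contra h0
    obtain ⟨i, k, -, hk⟩ := hclass h h0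
    rw [← hΦ, hh] at hk
    simp only [Pi.zero_apply, map_zero] at hk
    exact exp_ne_zero hk.symm
  have hsurj : Function.Surjective Φ :=
    (LinearMap.injective_iff_surjective_of_finrank_eq_finrank (by
      rw [L.finrank_eq, Module.finrank_fin_fun])).1 hinj
  obtain ⟨h, hh⟩ := hsurj (Pi.single c 1)
  have h0 : h ≠ 0 := by
    rintro rfl
    have := congrFun hh c
    simp at this
  have hv : L.v h = exp (-(L.ord (b c) : ℤ)) := by
    obtain ⟨i, k, h1, h2⟩ := hclass h h0
    rw [← hΦ, hh] at h2
    by_cases hic : i = c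
    · subst hic
      rw [Pi.single_eq_same, map_one, ← exp_zero, exp_inj] at h2
      rw [h1, ← h2]; simp
    · rw [Pi.single_eq_of_ne hic, map_zero] at h2
      exact absurd h2.symm exp_ne_zero
  -- `h` has integral traces against the whole integral closure
  have hdual : ∀ n : ℕ, ∀ z : F, IsIntegral K[X] z → L.ord z < n → z ≠ 0 →
      IsIntegral K[X] (L.tr (h * z)) := by
    intro n
    induction n with
    | zero => intro z _ h; omega
    | succ n ih =>
      intro z hz hzn hz0
      set i : Fin r := ⟨L.ord z % r, Nat.mod_lt _ hr⟩ with hi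
      have him : L.ord (b i) % r = L.ord z % r := by
        rw [hbj i, hi]; simp
      have hle := hbmin i z hz hz0 (by rw [hi]; simp)
      obtain ⟨t, ht⟩ : r ∣ L.ord z - L.ord (b i) :=
        (Nat.modEq_iff_dvd' hle).1 him
      have hX : (X ^ t : K[X]) ≠ 0 := pow_ne_zero _ X_ne_zero
      have hPb : IsIntegral K[X] (algebraMap K[X] F (X ^ t) * b i) := isIntegral_algebraMap.mul (hb i)
      have hPb0 : algebraMap K[X] F (X ^ t) * b i ≠ 0 := mul_ne_zero (poly_ne hX) (hb0 i)
      have hord : L.ord (algebraMap K[X] F (X ^ t) * b i) = L.ord z := by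
        rw [L.ord_mul isIntegral_algebraMap (poly_ne hX) (hb i) (hb0 i), L.ord_poly hX, natDegree_X_pow]
        omega
      obtain ⟨a, ha⟩ := L.v_res z (algebraMap K[X] F (X ^ t) * b i)
        ((Valuation.ne_zero_iff _).2 hPb0) (by rw [L.v_eq hz hz0, L.v_eq hPb hPb0, hord])
      set z' := z - algebraMap K[X] F (C a) * (algebraMap K[X] F (X ^ t) * b i) with hz'
      have hzi : IsIntegral K[X] z' := hz.sub (isIntegral_algebraMap.mul hPb)
      have hbi : IsIntegral K[X] (L.tr (h * b i)) := by
        rw [← hΦ, hh]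
        by_cases hic : i = c
        · rw [hic, Pi.single_eq_same]; exact isIntegral_one
        · rw [Pi.single_eq_of_ne hic]; exact isIntegral_zero
      have e : L.tr (h * z) = L.tr (h * z') + algebraMap K[X] (RatFunc K) (C a * X ^ t) * L.tr (h * b i) := by
        rw [← smul_eq_mul (algebraMap K[X] (RatFunc K) _), ← map_smul, ← map_add]
        congr 1
        rw [Algebra.smul_def, ← IsScalarTower.algebraMap_apply K[X] (RatFunc K) F, hz', map_mul]
        ring
      rw [e]
      refine IsIntegral.add ?_ (isIntegral_algebraMap.mul hbi)
      by_cases hz'0 : z' = 0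
      · rw [hz'0]; simpa using isIntegral_zero
      refine ih z' hzi ?_ hz'0
      rw [L.v_eq hzi hz'0, L.v_eq hPb hPb0, exp_lt_exp, hord] at ha
      omega
  have hm := L.m_mul_integral h fun z hz => by
    by_cases hz0 : z = 0
    · rw [hz0]; simpa using isIntegral_zero
    · exact hdual _ z hz (Nat.lt_succ_self _) hz0
  obtain ⟨hm5, hm0⟩ := mPoly_natDegree (K := K)
  have hmh0 : algebraMap K[X] F (mPoly K) * h ≠ 0 := mul_ne_zero (poly_ne hm0) h0
  have hord : (L.ord (algebraMap K[X] F (mPoly K) * h) : ℤ) = 5 * r - L.ord (b c) := by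
    have := L.v_eq hm hmh0
    rw [map_mul, L.v_poly hm0, hv, ← exp_add, exp_inj, hm5] at this
    push_cast at this
    linarith
  obtain ⟨t, ht⟩ := hcj
  refine shift _ hm hmh0 _ ?_ ⟨-1 - t, ?_⟩
  · rw [hord]
    have : t < 0 := by
      by_contra hneg
      push Not at hneg
      nlinarith
    nlinarith
  · rw [hord]; linarith

end Level
end SepCode
end

section
open Polynomial WithZero

namespace SepCode

/-- The integral closure of `K[s]` in a level of the tower, as an abstract curve. -/
lemma Level.exists_curve {K : Type} [Field K] {F : Type} [Field F] [Algebra K[X] F]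
    [Algebra (RatFunc K) F] [IsScalarTower K[X] (RatFunc K) F] {r : ℕ} (hr : 0 < r)
    {T : Finset K} (L : Level K F r) (P : Points T L.x r) :
    ∃ (B : Type) (_ : CommRing B) (_ : IsDomain B) (_ : Algebra K B),
      Nonempty (CurveData K T r B) := by
  have hfin := Module.finite_of_finrank_pos (R := RatFunc K) (M := F) (by rw [L.finrank_eq]; exact hr)
  let B := integralClosure K[X] F
  let alg : Algebra K B := ((algebraMap K[X] B).comp C).toAlgebra
  have halg : ∀ c : K, ((algebraMap K B c : B) : F) = algebraMap K[X] F (C c) := fun c => rfl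
  have hsm : ∀ (c : K) (z : B), ((c • z : B) : F) = algebraMap K[X] F (C c) * z := fun c z => rfl
  have hne : ∀ z : B, z ≠ 0 → (z : F) ≠ 0 := fun z hz h => hz (by exact_mod_cast h)
  have hreg : ∀ z : B, Reg T (z : F) := fun z => Reg.of_isIntegral z.2
  let D' : B →ₗ[K] B :=
    { toFun := fun z => ⟨algebraMap K[X] F (mPoly K) * L.D z, L.m_mul_D_integral z z.2⟩
      map_add' := fun z w => Subtype.ext (by
        change algebraMap K[X] F (mPoly K) * L.D (z + w) = algebraMap K[X] F (mPoly K) * L.D z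
          + algebraMap K[X] F (mPoly K) * L.D w
        rw [L.D_add, mul_add])
      map_smul' := fun c z => Subtype.ext (by
        change algebraMap K[X] F (mPoly K) * L.D (algebraMap K[X] F (C c) * z) =
          algebraMap K[X] F (C c) * (algebraMap K[X] F (mPoly K) * L.D z)
        rw [L.D_mul, L.D_algebraMap, derivative_C, map_zero]
        ring) }
  have hD' : ∀ z, ((D' z : B) : F) = algebraMap K[X] F (mPoly K) * L.D z := fun z => rfl
  refine ⟨B, inferInstance, inferInstance, alg, ⟨{
    s := algebraMap K[X] B X
    ρ := fun z => L.ord z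
    ρ_zero := L.ord_zero
    ρ_mul := fun z w hz hw => L.ord_mul z.2 (hne z hz) w.2 (hne w hw)
    ρ_add := fun z w => (L.ord_le (z.2.add w.2) _).2 ?_
    ρ_res := fun z w hz hw h => ?_
    ρ_s := by
      change L.ord (algebraMap K[X] F X) = r
      rw [L.ord_poly X_ne_zero]; simp
    ρ_C := fun c => ?_
    sg := fun j => ?_
    Δ := Derivation.mk' D' fun z w => ?_
    Δ_s := Subtype.ext ?_
    Δ_ρ := fun z => ?_
    ι := P.ι
    fintype := P.fintype
    χ := fun i =>
      { toFun := fun z => P.χ i z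
        map_one' := P.χ_one i
        map_mul' := fun z w => P.χ_mul i z w (hreg z) (hreg w)
        map_zero' := P.χ_zero i
        map_add' := fun z w => P.χ_add i z w (hreg z) (hreg w)
        commutes' := fun c => P.χ_C i c }
    χ_inj := fun i j hij => ?_
    χ_s := fun i => ?_
    card := fun α hα => ?_ }⟩⟩
  · refine (Valuation.map_add L.v z w).trans ?_
    refine max_le_max ((L.ord_le z.2 _).1 le_rfl) ((L.ord_le w.2 _).1 le_rfl) |>.trans ?_
    rcases le_total (L.ord z) (L.ord w) with h | h
    · rw [max_eq_right h, max_eq_right (by simpa using h)]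
    · rw [max_eq_left h, max_eq_left (by simpa using h)]
  · have hv : L.v z = L.v w := by rw [L.v_eq z.2 (hne z hz), L.v_eq w.2 (hne w hw), h]
    obtain ⟨c, hc⟩ := L.v_res z w ((Valuation.ne_zero_iff _).2 (hne w hw)) hv
    refine ⟨c, ?_⟩
    by_cases h0 : z - c • w = 0
    · exact .inl h0
    right
    have h1 : ((z - c • w : B) : F) = z - algebraMap K[X] F (C c) * w := rfl
    rw [← h1, L.v_eq (z - c • w).2 (hne _ h0), ← hv, L.v_eq z.2 (hne z hz), exp_lt_exp] at hc
    exact_mod_cast hc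
  · change L.ord (algebraMap K[X] F (C c)) = 0
    by_cases hc : c = 0
    · simp [hc, L.ord_zero]
    · rw [L.ord_poly (by simpa using hc)]; simp
  · rcases L.semigroup hr j with ⟨z, hz, h0, h⟩ | ⟨z, hz, h0, h⟩
    · exact .inl ⟨⟨z, hz⟩, fun h' => h0 (congrArg Subtype.val h'), h⟩
    · exact .inr ⟨⟨z, hz⟩, fun h' => h0 (congrArg Subtype.val h'), h⟩
  · apply Subtype.ext
    change algebraMap K[X] F (mPoly K) * L.D (z * w) = z * (algebraMap K[X] F (mPoly K) * L.D w)
      + w * (algebraMap K[X] F (mPoly K) * L.D z)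
    rw [L.D_mul]; ring
  · change algebraMap K[X] F (mPoly K) * L.D (algebraMap K[X] F X) = algebraMap K[X] F X ^ 5 - algebraMap K[X] F X
    rw [L.D_algebraMap, derivative_X, map_one, mul_one, mPoly, map_sub, map_pow]
  · change L.ord (D' z) ≤ _
    obtain ⟨hm5, hm0⟩ := Level.mPoly_natDegree (K := K)
    refine (L.ord_le (D' z).2 _).2 ?_
    rw [hD', map_mul, L.v_poly hm0, hm5]
    have h1 := L.D_v z
    have h2 := (L.ord_le z.2 _).1 le_rfl
    have e : (exp ((r * 5 : ℕ) : ℤ) : ℤᵐ⁰) = exp (r : ℤ) * exp ((4 * r : ℕ) : ℤ) := by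
      rw [← exp_add]; congr 1; push_cast; ring
    rw [e, mul_comm, ← mul_assoc]
    refine (mul_le_mul_left (h1.trans h2) _).trans ?_
    rw [← exp_add]
    simp
  · by_contra h
    obtain ⟨z, hz, hne⟩ := P.sep i j h
    exact hne (DFunLike.congr_fun hij (⟨z, hz⟩ : B))
  · change P.χ i (algebraMap K[X] F X) ∈ T
    rw [P.χ_algebraMap, eval_X]
    exact P.pt_mem i
  · have : ∀ i, P.χ i (algebraMap K[X] F X) = P.pt i := fun i => by rw [P.χ_algebraMap, eval_X]
    refine (Nat.card_congr (Equiv.subtypeEquivRight fun i => ?_)).trans (P.card α hα)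
    change P.χ i (algebraMap K[X] F X) = α ↔ _
    rw [this]

/-- A level of the tower with its points, bundled. -/
lemma exists_level {K : Type} [Field K] (h2 : (2 : K) ≠ 0) (hi : ∃ i : K, i ^ 2 = -1) {T : Finset K}
    (hT : IsGoodSet T) (n : ℕ) :
    ∃ (F : Type) (_ : Field F) (_ : Algebra K[X] F) (_ : Algebra (RatFunc K) F)
      (_ : IsScalarTower K[X] (RatFunc K) F) (L : Level K F (2 ^ n)),
      Nonempty (Points T L.x (2 ^ n)) := by
  induction n with
  | zero =>
    exact ⟨RatFunc K, inferInstance, inferInstance, inferInstance, inferInstance, baseLevel hi,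
      ⟨basePoints T⟩⟩
  | succ n ih =>
    obtain ⟨F, _, _, _, _, L, ⟨P⟩⟩ := ih
    have := L.fact h2
    rw [pow_succ, mul_comm]
    exact ⟨QuadraticAlgebra F L.f 0, inferInstance, inferInstance, inferInstance, inferInstance,
      L.step h2 (pow_pos two_pos n), ⟨Points.step L P h2 hT⟩⟩

/-- The `n`-th level of the tower, of degree `2ⁿ`, as an abstract curve. -/
lemma exists_curve {K : Type} [Field K] (h2 : (2 : K) ≠ 0) (hi : ∃ i : K, i ^ 2 = -1) {T : Finset K}
    (hT : IsGoodSet T) (n : ℕ) : ∃ (B : Type) (_ : CommRing B) (_ : IsDomain B) (_ : Algebra K B),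
      Nonempty (CurveData K T (2 ^ n) B) := by
  obtain ⟨F, _, _, _, _, L, ⟨P⟩⟩ := exists_level h2 hi hT n
  exact L.exists_curve (pow_pos two_pos n) P

end SepCode
end

/-! ### Riemann–Roch spaces at infinity -/

section
namespace SepCode
namespace CurveData

variable {K : Type} [Field K] {T : Finset K} {r : ℕ} {B : Type} [CommRing B] [Algebra K B]
  (c : CurveData K T r B)

lemma ρ_one : c.ρ 1 = 0 := by simpa using c.ρ_C 1

lemma ρ_neg (z : B) : c.ρ (-z) = c.ρ z := by
  have key : ∀ z : B, c.ρ (-z) ≤ c.ρ z := fun z => by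
    by_cases hz : z = 0
    · simp [hz]
    have h1 : (-1 : B) ≠ 0 := by
      intro h; apply hz; rw [← neg_neg z, ← neg_one_mul, h]; simp
    have h2 : c.ρ (-1) = 0 := by simpa using c.ρ_C (-1)
    rw [← neg_one_mul, c.ρ_mul _ _ h1 hz, h2, zero_add]
  refine le_antisymm (key z) ?_
  simpa using key (-z)

lemma ρ_sub (z w : B) : c.ρ (z - w) ≤ max (c.ρ z) (c.ρ w) := by
  rw [sub_eq_add_neg]
  exact (c.ρ_add _ _).trans (by rw [ρ_neg])

lemma ρ_mul_le (z w : B) : c.ρ (z * w) ≤ c.ρ z + c.ρ w := by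
  by_cases hz : z = 0
  · simp [hz, c.ρ_zero]
  by_cases hw : w = 0
  · simp [hw, c.ρ_zero]
  exact (c.ρ_mul z w hz hw).le

lemma ρ_smul_le (a : K) (z : B) : c.ρ (a • z) ≤ c.ρ z := by
  rw [Algebra.smul_def]
  exact (c.ρ_mul_le _ _).trans (by simp [c.ρ_C])

/-- The Riemann–Roch space of functions of pole order less than `n` (including zero). -/
def Lt (n : ℕ) : Submodule K B where
  carrier := {z | z = 0 ∨ c.ρ z < n}
  zero_mem' := .inl rfl
  add_mem' {z w} hz hw := by
    by_cases hz0 : z = 0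
    · simpa [hz0] using hw
    by_cases hw0 : w = 0
    · simpa [hw0] using hz
    right
    exact lt_of_le_of_lt (c.ρ_add z w) (max_lt (hz.resolve_left hz0) (hw.resolve_left hw0))
  smul_mem' a z hz := by
    rcases hz with rfl | hz
    · simp
    · exact .inr ((c.ρ_smul_le a z).trans_lt hz)

lemma mem_Lt {n : ℕ} {z : B} : z ∈ c.Lt n ↔ z = 0 ∨ c.ρ z < n := Iff.rfl

lemma mem_Lt_succ {n : ℕ} {z : B} : z ∈ c.Lt (n + 1) ↔ c.ρ z ≤ n := by
  rw [mem_Lt, Nat.lt_succ_iff]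
  refine ⟨?_, .inr⟩
  rintro (rfl | h)
  · simp [c.ρ_zero]
  · exact h

lemma Lt_mono {m n : ℕ} (h : m ≤ n) : c.Lt m ≤ c.Lt n := by
  rintro z (hz | hz)
  · exact .inl hz
  · exact .inr (hz.trans_le h)

/-- The Weierstrass semigroup at infinity. -/
def Γ : Set ℕ := {n | ∃ z, z ≠ 0 ∧ c.ρ z = n}

open Classical in
/-- The number of elements of the semigroup below `n`. -/
noncomputable def cnt (n : ℕ) : ℕ := Nat.count (· ∈ c.Γ) n

lemma Lt_dim (n : ℕ) : FiniteDimensional K (c.Lt n) ∧ Module.finrank K (c.Lt n) = c.cnt n := by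
  classical
  induction n with
  | zero =>
    have : c.Lt 0 = ⊥ := by ext z; simp [mem_Lt]
    rw [this]
    exact ⟨inferInstance, by simp [cnt]⟩
  | succ n ih =>
    obtain ⟨ih1, ih2⟩ := ih
    by_cases hn : n ∈ c.Γ
    · obtain ⟨z, hz0, hz⟩ := id hn
      have e : c.Lt (n + 1) = c.Lt n ⊔ Submodule.span K {z} := by
        apply le_antisymm
        · intro w hw
          by_cases hwn : w ∈ c.Lt n
          · exact Submodule.mem_sup_left hwn
          have hw0 : w ≠ 0 := fun h => hwn (.inl h)
          have h1 : ¬ c.ρ w < n := fun h => hwn (.inr h)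
          have h2 : c.ρ w ≤ n := c.mem_Lt_succ.1 hw
          have h3 : c.ρ w = c.ρ z := by omega
          obtain ⟨a, ha⟩ := c.ρ_res w z hw0 hz0 h3
          rw [← sub_add_cancel w (a • z)]
          refine Submodule.add_mem_sup ?_ (Submodule.smul_mem _ _ (Submodule.mem_span_singleton_self z))
          exact ha.imp id fun h => by omega
        · refine sup_le (c.Lt_mono (Nat.le_succ n)) ?_
          rw [Submodule.span_singleton_le_iff_mem, mem_Lt_succ, hz]
      have hinf : c.Lt n ⊓ Submodule.span K {z} = ⊥ := by
        rw [eq_bot_iff]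
        rintro w ⟨hw, hw'⟩
        obtain ⟨a, rfl⟩ := Submodule.mem_span_singleton.1 hw'
        by_cases ha : a = 0
        · simp [ha]
        have h1 : z ∈ c.Lt n := by
          have := (c.Lt n).smul_mem a⁻¹ hw
          rwa [smul_smul, inv_mul_cancel₀ ha, one_smul] at this
        rcases h1 with h1 | h1
        · exact absurd h1 hz0
        · omega
      have h := Submodule.finrank_sup_add_finrank_inf_eq (c.Lt n) (Submodule.span K {z})
      rw [hinf, finrank_bot, finrank_span_singleton hz0, ih2, ← e] at h
      refine ⟨by rw [e]; infer_instance, ?_⟩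
      rw [cnt, Nat.count_succ, if_pos hn]
      simpa [cnt] using h
    · have e : c.Lt (n + 1) = c.Lt n := by
        refine le_antisymm (fun z hz => ?_) (c.Lt_mono (Nat.le_succ n))
        by_cases hz0 : z = 0
        · exact .inl hz0
        right
        have h2 : c.ρ z ≤ n := c.mem_Lt_succ.1 hz
        exact lt_of_le_of_ne h2 fun h => hn ⟨z, hz0, h⟩
      rw [e]
      refine ⟨ih1, ?_⟩
      rw [ih2, cnt, cnt, Nat.count_succ, if_neg hn, add_zero]

instance (n : ℕ) : FiniteDimensional K (c.Lt n) := (c.Lt_dim n).1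

/-- The analogue of the genus, with `g ≤ 2 r`, and the Riemann–Roch formula in large degree. -/
lemma exists_genus : ∃ g ≤ 2 * r, ∀ n, 4 * r + 1 ≤ n → Module.finrank K (c.Lt n) + g = n := by
  classical
  -- reflection `j ↦ 4 r - j` maps gaps to pole orders
  have h1 : 4 * r + 1 ≤ 2 * c.cnt (4 * r + 1) := by
    let G := (Finset.range (4 * r + 1)).filter (· ∈ c.Γ)
    have hG : G.card = c.cnt (4 * r + 1) := by rw [cnt, Nat.count_eq_card_filter_range]
    have hsub : Finset.range (4 * r + 1) ⊆ G ∪ G.image (fun j => 4 * r - j) := by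
      intro j hj
      rw [Finset.mem_range] at hj
      rw [Finset.mem_union]
      rcases c.sg j with ⟨z, hz, h⟩ | ⟨z, hz, h⟩
      · left
        exact Finset.mem_filter.2 ⟨Finset.mem_range.2 hj, z, hz, by exact_mod_cast h⟩
      · right
        refine Finset.mem_image.2 ⟨4 * r - j, Finset.mem_filter.2 ⟨?_, z, hz, ?_⟩, ?_⟩
        · rw [Finset.mem_range]; omega
        · omega
        · omega
    have := (Finset.card_le_card hsub).trans (Finset.card_union_le _ _)
    have h3 := Finset.card_image_le (s := G) (f := fun j => 4 * r - j)
    rw [Finset.card_range] at this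
    omega
  have h2 : c.cnt (4 * r + 1) ≤ 4 * r + 1 := by rw [cnt]; exact Nat.count_le _
  refine ⟨4 * r + 1 - c.cnt (4 * r + 1), by omega, fun n hn => ?_⟩
  rw [(c.Lt_dim n).2]
  induction n, hn using Nat.le_induction with
  | base => omega
  | succ n hn ih =>
    have : n ∈ c.Γ := by
      rcases c.sg n with ⟨z, hz, h⟩ | ⟨z, hz, h⟩
      · exact ⟨z, hz, by exact_mod_cast h⟩
      · omega
    have e : c.cnt (n + 1) = c.cnt n + 1 := by rw [cnt, Nat.count_succ, if_pos this, cnt]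
    omega

end CurveData
end SepCode
end

/-! ### Zeros of functions -/

section
open Polynomial


namespace SepCode

lemma finrank_map_add_inf_ker {K B M : Type} [Field K] [AddCommGroup B] [Module K B]
    [AddCommGroup M] [Module K M] (U : Submodule K B) [FiniteDimensional K U] (φ : B →ₗ[K] M) :
    Module.finrank K (U.map φ) + Module.finrank K (U ⊓ LinearMap.ker φ : Submodule K B)
      = Module.finrank K U := by
  have h := LinearMap.finrank_range_add_finrank_ker (φ.domRestrict U)
  rw [LinearMap.range_domRestrict] at h
  rw [← h]
  congr 1
  have : (LinearMap.ker (φ.domRestrict U)).map U.subtype = U ⊓ LinearMap.ker φ := by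
    ext z
    simp only [Submodule.mem_map, LinearMap.mem_ker, Submodule.mem_inf]
    constructor
    · rintro ⟨y, hy, rfl⟩
      exact ⟨y.2, hy⟩
    · rintro ⟨hz, h⟩
      exact ⟨⟨z, hz⟩, h, rfl⟩
  rw [← this]
  exact (Submodule.equivMapOfInjective U.subtype U.subtype_injective
    (LinearMap.ker (φ.domRestrict U))).finrank_eq.symm

namespace CurveData

variable {K : Type} [Field K] {T : Finset K} {r : ℕ} {B : Type} [CommRing B] [Algebra K B]
  (c : CurveData K T r B)

instance : Fintype c.ι := c.fintype

/-- Evaluation at the points of `S`. -/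
def ev (S : Finset c.ι) : B →ₗ[K] (S → K) := LinearMap.pi fun i => (c.χ i).toLinearMap

/-- The functions vanishing on `S`. -/
def Z (S : Finset c.ι) : Submodule K B := LinearMap.ker (c.ev S)

lemma mem_Z {S : Finset c.ι} {z : B} : z ∈ c.Z S ↔ ∀ i ∈ S, c.χ i z = 0 := by
  simp [Z, ev, funext_iff]

open Classical in
lemma exists_delta : ∃ e : c.ι → B, ∀ i j, c.χ j (e i) = if i = j then 1 else 0 := by
  have h1 : ∀ i j, i ≠ j → ∃ z, c.χ i z = 1 ∧ c.χ j z = 0 := by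
    intro i j hij
    have : c.χ i ≠ c.χ j := fun h => hij (c.χ_inj h)
    obtain ⟨b, hb⟩ := DFunLike.ne_iff.1 this
    have hb' := sub_ne_zero.2 hb
    refine ⟨(c.χ i b - c.χ j b)⁻¹ • (b - algebraMap K B (c.χ j b)), ?_, ?_⟩ <;>
      simp [hb']
  choose! z hz1 hz2 using h1
  refine ⟨fun i => ∏ j ∈ Finset.univ.erase i, z i j, fun i j => ?_⟩
  rw [map_prod]
  split_ifs with h
  · subst h
    exact Finset.prod_eq_one fun j hj => hz1 _ _ (Finset.ne_of_mem_erase hj).symm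
  · exact Finset.prod_eq_zero (Finset.mem_erase.2 ⟨Ne.symm h, Finset.mem_univ j⟩) (hz2 _ _ h)

lemma finrank_inf_Z_ge (U : Submodule K B) [FiniteDimensional K U] (S : Finset c.ι) :
    Module.finrank K U ≤ Module.finrank K (U ⊓ c.Z S : Submodule K B) + S.card := by
  have h := finrank_map_add_inf_ker U (c.ev S)
  have h2 := Submodule.finrank_le (U.map (c.ev S))
  rw [Module.finrank_fintype_fun_eq_card, Fintype.card_coe] at h2
  rw [Z]
  omega

/-- Points impose independent conditions on functions of large pole order. -/
lemma exists_surj : ∃ N, ∀ n, N ≤ n → ∀ S : Finset c.ι,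
    Module.finrank K (c.Lt n) = Module.finrank K (c.Lt n ⊓ c.Z S : Submodule K B) + S.card := by
  classical
  obtain ⟨e, he⟩ := c.exists_delta
  refine ⟨∑ i, c.ρ (e i) + 1, fun n hn S => ?_⟩
  have h := finrank_map_add_inf_ker (c.Lt n) (c.ev S)
  have h2 : (c.Lt n).map (c.ev S) = ⊤ := by
    rw [eq_top_iff]
    intro y _
    refine ⟨∑ i : S, y i • e i, ?_, ?_⟩
    · refine Submodule.sum_mem _ fun i _ => Submodule.smul_mem _ _ (.inr ?_)
      have := Finset.single_le_sum (f := fun i => c.ρ (e i)) (fun i _ => Nat.zero_le _)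
        (Finset.mem_univ i.1)
      omega
    · ext j
      simp only [ev, LinearMap.pi_apply, AlgHom.toLinearMap_apply, map_sum, map_smul, he,
        smul_eq_mul, mul_ite, mul_one, mul_zero]
      rw [Finset.sum_eq_single j]
      · simp
      · intro i _ hij
        rw [if_neg]
        exact fun h => hij (Subtype.ext h)
      · simp
  rw [h2, finrank_top, Module.finrank_fintype_fun_eq_card, Fintype.card_coe] at h
  rw [Z]
  omega

section
variable [IsDomain B]

/-- A nonzero function has at most as many zeros as its pole order; in case of equality it divides
every function vanishing at its zeros. -/
lemma zeros {S : Finset c.ι} {z : B} (hz : z ≠ 0) (hS : z ∈ c.Z S) :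
    S.card ≤ c.ρ z ∧ (S.card = c.ρ z → ∀ w ∈ c.Z S, ∃ h, w = z * h) := by
  obtain ⟨g, -, hg⟩ := c.exists_genus
  obtain ⟨N, hN⟩ := c.exists_surj
  have key : ∀ n, 4 * r + 1 + N ≤ n → S.card ≤ c.ρ z ∧ (S.card = c.ρ z → 
      c.Lt (n + c.ρ z) ⊓ c.Z S = (c.Lt n).map (LinearMap.mulLeft K z)) := by
    intro n hn
    have h1 := hN (n + c.ρ z) (by omega) S
    have h2 := hg (n + c.ρ z) (by omega)
    have h3 := hg n (by omega)
    have h4 : (c.Lt n).map (LinearMap.mulLeft K z) ≤ c.Lt (n + c.ρ z) ⊓ c.Z S := by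
      rintro _ ⟨w, hw, rfl⟩
      refine ⟨?_, ?_⟩
      · rcases hw with rfl | hw
        · simp
        · right
          have := c.ρ_mul_le z w
          simp only [LinearMap.mulLeft_apply]
          omega
      · rw [SetLike.mem_coe, mem_Z] at *
        intro i hi
        simp [hS i hi]
    have h5 : Module.finrank K ((c.Lt n).map (LinearMap.mulLeft K z)) = Module.finrank K (c.Lt n) :=
      (Submodule.equivMapOfInjective (LinearMap.mulLeft K z) (mul_right_injective₀ hz) (c.Lt n)).finrank_eq.symm
    have h6 := Submodule.finrank_mono h4
    refine ⟨by omega, fun h => (Submodule.eq_of_le_of_finrank_eq h4 (by omega)).symm⟩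
  refine ⟨(key _ le_rfl).1, fun h w hw => ?_⟩
  have := (key (4 * r + 1 + N + (c.ρ w + 1)) (by omega)).2 h
  have hw' : w ∈ c.Lt (4 * r + 1 + N + (c.ρ w + 1) + c.ρ z) ⊓ c.Z S := ⟨.inr (by omega), hw⟩
  rw [this] at hw'
  obtain ⟨y, -, hy⟩ := hw'
  exact ⟨y, hy.symm⟩

/-- The function `∏ (s - α)`, whose zeros are all the rational points. -/
noncomputable def φ : B := aeval c.s (∏ α ∈ T, (X - C α))

lemma sub_ne (hr : 0 < r) (α : K) : c.s - algebraMap K B α ≠ 0 := by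
  intro h
  have := c.ρ_C α
  rw [← sub_eq_zero.1 h, c.ρ_s] at this
  omega

lemma ρ_s_sub (α : K) : c.ρ (c.s - algebraMap K B α) = r := by
  apply le_antisymm
  · exact (c.ρ_sub _ _).trans (by simp [c.ρ_s, c.ρ_C])
  · have := c.ρ_add (c.s - algebraMap K B α) (algebraMap K B α)
    rw [sub_add_cancel, c.ρ_s, c.ρ_C] at this
    simpa using this

lemma φ_eq : c.φ = ∏ α ∈ T, (c.s - algebraMap K B α) := by
  simp [φ, map_prod]

lemma φ_ne (hr : 0 < r) : c.φ ≠ 0 := by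
  rw [φ_eq, Finset.prod_ne_zero_iff]
  exact fun α _ => c.sub_ne hr α

lemma ρ_φ (hr : 0 < r) : c.ρ c.φ = T.card * r := by
  classical
  have : ∀ S : Finset K, c.ρ (∏ α ∈ S, (c.s - algebraMap K B α)) = S.card * r := by
    intro S
    induction S using Finset.induction_on with
    | empty => simp [ρ_one]
    | insert a S ha ih =>
      rw [Finset.prod_insert ha, c.ρ_mul _ _ (c.sub_ne hr a)
        (Finset.prod_ne_zero_iff.2 fun α _ => c.sub_ne hr α), ih, c.ρ_s_sub,
        Finset.card_insert_of_notMem ha]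
      ring
  rw [φ_eq, this]

lemma card_ι : Fintype.card c.ι = T.card * r := by
  classical
  rw [← Finset.card_univ, Finset.card_eq_sum_card_fiberwise (f := fun i => c.χ i c.s) (t := T)
    (fun i _ => c.χ_s i), ← smul_eq_mul, ← Finset.sum_const]
  refine Finset.sum_congr rfl fun α hα => ?_
  have h := c.card α hα
  rwa [Nat.card_eq_fintype_card, Fintype.card_subtype] at h

lemma χ_φ (i : c.ι) : c.χ i c.φ = 0 := by
  rw [φ_eq, map_prod]
  exact Finset.prod_eq_zero (c.χ_s i) (by simp)

lemma χ_Δφ (hT : IsGoodSet T) (i : c.ι) : c.χ i (c.Δ c.φ) ≠ 0 := by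
  rw [φ, Derivation.map_aeval, c.Δ_s, smul_eq_mul, map_mul]
  have hα := c.χ_s i
  refine mul_ne_zero ?_ ?_
  · rw [← AlgHom.comp_apply, ← aeval_algHom]
    exact (separable_prod_X_sub_C_iff'.2 (fun a _ b _ h => h)).aeval_derivative_ne_zero
      (by rw [map_prod]; exact Finset.prod_eq_zero hα (by simp))
  · have h1 := hT.ne_zero _ hα
    have h2 := hT.pow_ne _ hα
    rw [map_sub, map_pow]
    have : c.χ i c.s ^ 5 - c.χ i c.s = c.χ i c.s * (c.χ i c.s ^ 4 - 1) := by ring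
    rw [this]
    exact mul_ne_zero h1 (sub_ne_zero.2 h2)

/-- A function vanishing at all rational points is a multiple of `φ`. -/
lemma φ_dvd (hr : 0 < r) {w : B} (hw : ∀ i, c.χ i w = 0) : ∃ h, w = c.φ * h := by
  refine (c.zeros (S := Finset.univ) (c.φ_ne hr) (c.mem_Z.2 fun i _ => c.χ_φ i)).2 ?_ w
    (c.mem_Z.2 fun i _ => hw i)
  rw [Finset.card_univ, c.card_ι, c.ρ_φ hr]

lemma exists_ne {w : B} (hw : w ≠ 0) (h : c.ρ w < T.card * r) : ∃ i, c.χ i w ≠ 0 := by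
  by_contra! hc
  have := (c.zeros (S := Finset.univ) hw (c.mem_Z.2 fun i _ => hc i)).1
  rw [Finset.card_univ, c.card_ι] at this
  omega

end
end CurveData
end SepCode
end

/-! ### Wronskians and an intersecting code -/

section

namespace SepCode
namespace CurveData

variable {K : Type} [Field K] {T : Finset K} {r : ℕ} {B : Type} [CommRing B] [Algebra K B]
  (c : CurveData K T r B)

/-- The Wronskian `W f g = f Δg - g Δf`, as a linear map in `g`. -/
def W (f : B) : B →ₗ[K] B := LinearMap.mulLeft K f ∘ₗ c.Δ.toLinearMap - LinearMap.mulLeft K (c.Δ f)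

lemma W_apply (f g : B) : c.W f g = f * c.Δ g - c.Δ f * g := rfl

lemma ρ_W {f g : B} (hf : c.ρ f ≤ 6 * r) (hg : c.ρ g ≤ 6 * r) : c.ρ (c.W f g) ≤ 16 * r := by
  rw [W_apply]
  refine (c.ρ_sub _ _).trans (max_le ?_ ?_)
  · have := c.ρ_mul_le f (c.Δ g)
    have := c.Δ_ρ g
    omega
  · have := c.ρ_mul_le (c.Δ f) g
    have := c.Δ_ρ f
    omega

lemma W_comm {f g : B} (h : c.W f g = 0) : c.W g f = 0 := by
  rw [W_apply] at *
  linear_combination -h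

section
variable [IsDomain B]

lemma W_trans {f g h : B} (hf : f ≠ 0) (h1 : c.W f g = 0) (h2 : c.W f h = 0) : c.W g h = 0 := by
  rw [W_apply] at *
  refine (mul_eq_zero.1 ?_).resolve_left hf
  linear_combination g * h2 - h * h1

/-- The elements of `U` whose ratio with `f` has derivative zero. -/
def constClass (U : Submodule K B) (f : B) : Submodule K B := U ⊓ LinearMap.ker (c.W f)

lemma mem_constClass {U : Submodule K B} {f g : B} :
    g ∈ c.constClass U f ↔ g ∈ U ∧ c.W f g = 0 := by
  simp [constClass]

/-- Every class of functions proportional up to constants of `Δ` fills at most about half of `U`. -/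
def Balanced (U : Submodule K B) : Prop :=
  ∀ f ∈ U, f ≠ 0 → 2 * Module.finrank K (c.constClass U f) ≤ Module.finrank K U + 2

lemma Δs_ne (hr : 0 < r) : c.Δ c.s ≠ 0 := by
  have hs : c.s ≠ 0 := by
    intro h
    have := c.ρ_s
    rw [h, c.ρ_zero] at this
    omega
  have hp : ∀ n, c.ρ (c.s ^ n) = n * r := by
    intro n
    induction n with
    | zero => simp [ρ_one]
    | succ n ih =>
      rw [pow_succ, c.ρ_mul _ _ (pow_ne_zero _ hs) hs, ih, c.ρ_s]
      ring
  intro h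
  rw [c.Δ_s, sub_eq_zero] at h
  have := hp 5
  rw [h, c.ρ_s] at this
  omega

/-- The class of `f` is a subspace on which multiples by `1, s, s²` remain independent; comparing
with the dimension of the functions of pole order at most `8 r` bounds it by a third of that. -/
lemma balanced_Lt (h2 : (2 : K) ≠ 0) (hr : 0 < r) : c.Balanced (c.Lt (6 * r + 1)) := by
  intro f hf hf0
  obtain ⟨g, hg, hgn⟩ := c.exists_genus
  have e1 := hgn (6 * r + 1) (by omega)
  have e2 := hgn (8 * r + 1) (by omega)
  set S := c.constClass (c.Lt (6 * r + 1)) f with hS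
  have h2B : (2 : B) ≠ 0 := by
    have := (map_ne_zero_iff (algebraMap K B) (algebraMap K B).injective).2 h2
    rwa [map_ofNat] at this
  have hW : ∀ b, c.W f b = 0 → ∀ t : B, c.W f (t * b) = f * b * c.Δ t := by
    intro b hb t
    rw [W_apply] at *
    simp only [Derivation.leibniz, smul_eq_mul]
    linear_combination t * hb
  -- `1, s, s²` are linearly independent over the field of constants of `Δ`
  let ψ : (S × S × S) →ₗ[K] B :=
    S.subtype.coprod ((LinearMap.mulLeft K c.s ∘ₗ S.subtype).coprod
      (LinearMap.mulLeft K (c.s ^ 2) ∘ₗ S.subtype))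
  have hψ : ∀ a b d : S, ψ (a, b, d) = a + (c.s * b + c.s ^ 2 * d) := fun a b d => rfl
  have hinj : Function.Injective ψ := by
    rw [← LinearMap.ker_eq_bot, LinearMap.ker_eq_bot']
    rintro ⟨a, b, d⟩ h
    rw [hψ] at h
    have ha := (c.mem_constClass.1 a.2).2
    have hb := (c.mem_constClass.1 b.2).2
    have hd := (c.mem_constClass.1 d.2).2
    have hΔ := c.Δs_ne hr
    have h3 := congrArg (c.W f) h
    rw [map_add, map_add, ha, hW _ hb, hW _ hd, map_zero, Derivation.leibniz_pow] at h3
    have h4 : (b : B) + c.s * (2 * d) = 0 := by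
      have : (f * c.Δ c.s) * ((b : B) + c.s * (2 * d)) = 0 := by
        rw [← h3]; simp [nsmul_eq_mul]; ring
      exact (mul_eq_zero.1 this).resolve_left (mul_ne_zero hf0 hΔ)
    have hd2 : c.W f (2 * d) = 0 := by
      rw [two_mul, map_add, hd, add_zero]
    have h5 := congrArg (c.W f) h4
    rw [map_add, hb, hW _ hd2, map_zero, zero_add] at h5
    have hd0 : (d : B) = 0 := by
      have : (f * c.Δ c.s * 2) * (d : B) = 0 := by rw [← h5]; ring
      exact (mul_eq_zero.1 this).resolve_left (mul_ne_zero (mul_ne_zero hf0 hΔ) h2B)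
    have hb0 : (b : B) = 0 := by simpa [hd0] using h4
    have ha0 : (a : B) = 0 := by simpa [hd0, hb0] using h
    ext <;> simp [ha0, hb0, hd0]
  have hrange : LinearMap.range ψ ≤ c.Lt (8 * r + 1) := by
    rintro _ ⟨⟨a, b, d⟩, rfl⟩
    rw [hψ]
    have hm : ∀ x : S, c.ρ (x : B) ≤ 6 * r := fun x =>
      c.mem_Lt_succ.1 (c.mem_constClass.1 x.2).1
    have hs2 : c.ρ (c.s ^ 2) ≤ 2 * r := by
      rw [pow_two]
      have := c.ρ_mul_le c.s c.s
      rw [c.ρ_s] at this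
      omega
    refine Submodule.add_mem _ ?_ (Submodule.add_mem _ ?_ ?_) <;> rw [mem_Lt_succ]
    · have := hm a; omega
    · have := hm b
      have h := c.ρ_mul_le c.s b
      rw [c.ρ_s] at h
      omega
    · have := hm d
      have h := c.ρ_mul_le (c.s ^ 2) d
      omega
  have : FiniteDimensional K S := Submodule.finiteDimensional_of_le inf_le_left
  have h3 := Submodule.finrank_mono hrange
  rw [LinearMap.finrank_range_of_inj hinj, Module.finrank_prod, Module.finrank_prod] at h3
  omega

lemma exists_small (hr : 0 < r) (hT : T.card = 20) (n : ℕ) : ∀ U : Submodule K B,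
    U ≤ c.Lt (6 * r + 1) → Module.finrank K U = n →
    ∃ Q : Finset c.ι, Q.card ≤ n ∧ ∀ f ∈ U, (∀ i ∈ Q, c.χ i f = 0) → f = 0 := by
  classical
  induction n using Nat.strong_induction_on with
  | _ n ih =>
    intro U hU hn
    have hfd : FiniteDimensional K U := Submodule.finiteDimensional_of_le hU
    by_cases h0 : U = ⊥
    · exact ⟨∅, by simp, fun f hf _ => by simpa [h0] using hf⟩
    obtain ⟨f, hf, hf0⟩ := Submodule.exists_mem_ne_zero_of_ne_bot h0
    have hρ : c.ρ f ≤ 6 * r := c.mem_Lt_succ.1 (hU hf)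
    obtain ⟨i, hi⟩ := c.exists_ne hf0 (by rw [hT]; omega)
    let V := U ⊓ LinearMap.ker (c.χ i).toLinearMap
    have hlt : V < U := lt_of_le_of_ne inf_le_left fun h => hi (by
      have : f ∈ V := h ▸ hf
      exact this.2)
    have hlt' := Submodule.finrank_lt_finrank_of_lt hlt
    obtain ⟨Q, hQ, hQ'⟩ := ih _ (by omega) V (inf_le_left.trans hU) rfl
    refine ⟨insert i Q, (Finset.card_insert_le _ _).trans (by omega), fun g hg hgz => ?_⟩
    exact hQ' g ⟨hg, hgz i (Finset.mem_insert_self _ _)⟩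
      fun j hj => hgz j (Finset.mem_insert_of_mem hj)

/-- The value and the derivative at a point. -/
def jet (i : c.ι) : B →ₗ[K] K × K :=
  (c.χ i).toLinearMap.prod ((c.χ i).toLinearMap ∘ₗ c.Δ.toLinearMap)

lemma jet_apply (i : c.ι) (f : B) : c.jet i f = (c.χ i f, c.χ i (c.Δ f)) := rfl

lemma χ_W (i : c.ι) (f g : B) : c.χ i (c.W f g) =
    c.χ i f * c.χ i (c.Δ g) - c.χ i (c.Δ f) * c.χ i g := by
  simp [W_apply]

/-- Points whose `1`-jets determine the elements of `U`, about half the dimension in number: each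
point, chosen where a suitable Wronskian does not vanish, cuts the dimension by two. -/
lemma exists_jets (hr : 0 < r) (hT : T.card = 20) (n : ℕ) : ∀ U : Submodule K B,
    U ≤ c.Lt (6 * r + 1) → Module.finrank K U = n → c.Balanced U →
    ∃ Q : Finset c.ι, 2 * Q.card ≤ n + 2 ∧
      ∀ f ∈ U, (∀ i ∈ Q, c.χ i f = 0 ∧ c.χ i (c.Δ f) = 0) → f = 0 := by
  classical
  induction n using Nat.strong_induction_on with
  | _ n ih =>
    intro U hU hn hbal
    have hfd : FiniteDimensional K U := Submodule.finiteDimensional_of_le hU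
    have hfc : ∀ f, FiniteDimensional K (c.constClass U f) :=
      fun f => Submodule.finiteDimensional_of_le inf_le_left
    by_cases hn3 : n < 3
    · obtain ⟨Q, hQ, hQ'⟩ := c.exists_small hr hT n U hU hn
      exact ⟨Q, by omega, fun f hf h => hQ' f hf fun i hi => (h i hi).1⟩
    -- `f` lies in a class of more than half the dimension whenever there is one
    have hex : ∃ f ∈ U, f ≠ 0 ∧ ∀ f' ∈ U, f' ≠ 0 →
        n < 2 * Module.finrank K (c.constClass U f') →
        n < 2 * Module.finrank K (c.constClass U f) := by
      by_cases h : ∃ f ∈ U, f ≠ 0 ∧ n < 2 * Module.finrank K (c.constClass U f)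
      · obtain ⟨f, h1, h2, h3⟩ := h
        exact ⟨f, h1, h2, fun _ _ _ _ => h3⟩
      · have hU0 : U ≠ ⊥ := by
          rintro rfl
          rw [finrank_bot] at hn
          omega
        obtain ⟨f, hf, hf0⟩ := Submodule.exists_mem_ne_zero_of_ne_bot hU0
        exact ⟨f, hf, hf0, fun f' h1 h2 h3 => absurd ⟨f', h1, h2, h3⟩ h⟩
    obtain ⟨f, hf, hf0, hbig⟩ := hex
    have hne : ∃ g ∈ U, c.W f g ≠ 0 := by
      by_contra! h
      have h1 : c.constClass U f = U := inf_eq_left.2 fun g hg => h g hg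
      have h2 := hbal f hf hf0
      rw [h1] at h2
      omega
    obtain ⟨g, hg, hW⟩ := hne
    have hρW := c.ρ_W (c.mem_Lt_succ.1 (hU hf)) (c.mem_Lt_succ.1 (hU hg))
    obtain ⟨i, hi⟩ := c.exists_ne hW (by rw [hT]; omega)
    rw [χ_W] at hi
    let V := U ⊓ LinearMap.ker (c.jet i)
    have hVU : V ≤ U := inf_le_left
    have hVmem : ∀ h, h ∈ V ↔ h ∈ U ∧ c.χ i h = 0 ∧ c.χ i (c.Δ h) = 0 := by
      intro h
      rw [Submodule.mem_inf, LinearMap.mem_ker, jet_apply, Prod.mk_eq_zero]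
    have hdim : Module.finrank K V + 2 = n := by
      have h1 := finrank_map_add_inf_ker U (c.jet i)
      have h2 : U.map (c.jet i) = ⊤ := by
        rw [eq_top_iff]
        rintro ⟨x, y⟩ -
        set D := c.χ i f * c.χ i (c.Δ g) - c.χ i (c.Δ f) * c.χ i g
        refine ⟨(D⁻¹ * (x * c.χ i (c.Δ g) - y * c.χ i g)) • f
          + (D⁻¹ * (y * c.χ i f - x * c.χ i (c.Δ f))) • g,
          U.add_mem (U.smul_mem _ hf) (U.smul_mem _ hg), ?_⟩
        rw [jet_apply]
        simp only [map_add, map_smul, Derivation.map_smul, smul_eq_mul]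
        rw [Prod.mk.injEq]
        constructor
        · calc _ = D⁻¹ * D * x := by simp only [D]; ring
            _ = x := by rw [inv_mul_cancel₀ hi, one_mul]
        · calc _ = D⁻¹ * D * y := by simp only [D]; ring
            _ = y := by rw [inv_mul_cancel₀ hi, one_mul]
      rw [h2, finrank_top, Module.finrank_prod, Module.finrank_self] at h1
      change 1 + 1 + Module.finrank K V = _ at h1
      omega
    have hfV : f ∉ V := by
      rw [hVmem]
      rintro ⟨-, h1, h2⟩
      apply hi
      rw [h1, h2]; ring
    have hbalV : c.Balanced V := by
      intro f' hf' hf'0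
      have hle : c.constClass V f' ≤ c.constClass U f' := inf_le_inf_right _ hVU
      have hmono := Submodule.finrank_mono hle
      have hb' := hbal f' (hVU hf') hf'0
      by_cases hsm : 2 * Module.finrank K (c.constClass U f') ≤ n
      · omega
      have hb := hbig f' (hVU hf') hf'0 (by omega)
      -- two classes of more than half the dimension coincide
      have hinf : c.constClass U f ⊓ c.constClass U f' ≠ ⊥ := by
        intro h
        have h1 := Submodule.finrank_sup_add_finrank_inf_eq (c.constClass U f) (c.constClass U f')
        rw [h, finrank_bot] at h1
        have h2 : Module.finrank K (c.constClass U f ⊔ c.constClass U f' : Submodule K B)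
            ≤ Module.finrank K U := Submodule.finrank_mono (sup_le inf_le_left inf_le_left)
        omega
      obtain ⟨h, ⟨hh1, hh2⟩, hh0⟩ := Submodule.exists_mem_ne_zero_of_ne_bot hinf
      have k1 := c.W_comm (c.mem_constClass.1 hh1).2
      have k2 := c.W_comm (c.mem_constClass.1 hh2).2
      have k3 : f ∈ c.constClass U f' := c.mem_constClass.2 ⟨hf, c.W_trans hh0 k2 k1⟩
      have hlt : c.constClass V f' < c.constClass U f' :=
        lt_of_le_of_ne hle fun e => hfV (by
          rw [← e] at k3
          exact (c.mem_constClass.1 k3).1)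
      have := Submodule.finrank_lt_finrank_of_lt hlt
      omega
    obtain ⟨Q, hQ, hQ'⟩ := ih (Module.finrank K V) (by omega) V (hVU.trans hU) rfl hbalV
    refine ⟨insert i Q, ?_, fun h hh hz => ?_⟩
    · have := Finset.card_insert_le i Q
      omega
    · exact hQ' h ((hVmem h).2 ⟨hh, hz i (Finset.mem_insert_self _ _)⟩)
        fun j hj => hz j (Finset.mem_insert_of_mem hj)

end

/-- A linear code in which two nonzero words always have intersecting supports. -/
def IsIntersecting {κ : Type} (V : Submodule K (κ → K)) : Prop :=
  ∀ f ∈ V, ∀ g ∈ V, (∀ i, f i * g i = 0) → f = 0 ∨ g = 0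

section
variable [IsDomain B]

/-- The outer code, of length `20 r` and dimension at least `9 r`: functions of pole order at most
`13 r` vanishing on `Q`, evaluated off `Q`, with derivatives taken on `Q`. If the product of two
code words is zero, then the product of the functions is `φ h` with `ρ h ≤ 6 r`, and the first two
derivatives show that the `1`-jets of `h` on `Q` vanish, so that `h = 0` by the choice of `Q`. -/
lemma exists_code (h2 : (2 : K) ≠ 0) (hr : 0 < r) (hT : IsGoodSet T) (hT' : T.card = 20) :
    ∃ V : Submodule K (c.ι → K), 9 * r ≤ Module.finrank K V ∧ IsIntersecting V := by
  classical
  obtain ⟨g, hg, hgn⟩ := c.exists_genus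
  obtain ⟨Q, hQ, hQ'⟩ := c.exists_jets hr hT' _ _ le_rfl rfl (c.balanced_Lt h2 hr)
  have e1 := hgn (6 * r + 1) (by omega)
  have e2 := hgn (13 * r + 1) (by omega)
  let U := c.Lt (13 * r + 1) ⊓ c.Z Q
  have hdim := c.finrank_inf_Z_ge (c.Lt (13 * r + 1)) Q
  let E : B →ₗ[K] (c.ι → K) := LinearMap.pi fun i =>
    if i ∈ Q then (c.χ i).toLinearMap ∘ₗ c.Δ.toLinearMap else (c.χ i).toLinearMap
  have hE1 : ∀ f i, i ∈ Q → E f i = c.χ i (c.Δ f) := fun f i hi => by simp [E, hi]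
  have hE2 : ∀ f i, i ∉ Q → E f i = c.χ i f := fun f i hi => by simp [E, hi]
  have key : ∀ f ∈ U, ∀ g ∈ U, (∀ i, E f i * E g i = 0) → f = 0 ∨ g = 0 := by
    intro f hf g hg hfg
    by_contra! hne
    have hfQ := c.mem_Z.1 hf.2
    have hgQ := c.mem_Z.1 hg.2
    have hv : ∀ i, c.χ i (f * g) = 0 := by
      intro i
      rw [map_mul]
      by_cases hi : i ∈ Q
      · rw [hfQ i hi, zero_mul]
      · rw [← hE2 f i hi, ← hE2 g i hi, hfg]
    obtain ⟨h, hh⟩ := c.φ_dvd hr hv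
    have hfg0 : f * g ≠ 0 := mul_ne_zero hne.1 hne.2
    have hh0 : h ≠ 0 := by
      rintro rfl
      exact hfg0 (by rw [hh, mul_zero])
    have hρh : h ∈ c.Lt (6 * r + 1) := by
      rw [mem_Lt_succ]
      have k1 := congrArg c.ρ hh
      rw [c.ρ_mul _ _ hne.1 hne.2, c.ρ_mul _ _ (c.φ_ne hr) hh0, c.ρ_φ hr, hT'] at k1
      have k2 := c.mem_Lt_succ.1 hf.1
      have k3 := c.mem_Lt_succ.1 hg.1
      omega
    refine hh0 (hQ' h hρh fun i hi => ?_)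
    have hφ := c.χ_φ i
    have hφ' := c.χ_Δφ hT i
    have kf := hfQ i hi
    have kg := hgQ i hi
    have kfg := hfg i
    rw [hE1 f i hi, hE1 g i hi] at kfg
    -- first and second derivatives of `f g = φ h` at a common zero of `f` and `g`
    have d1 := congrArg (fun z => c.χ i (c.Δ z)) hh
    have d2 := congrArg (fun z => c.χ i (c.Δ (c.Δ z))) hh
    simp only [Derivation.leibniz, map_add, smul_eq_mul, map_mul] at d1 d2
    rw [kf, kg, hφ] at d1 d2
    have k1 : c.χ i h = 0 := by
      refine (mul_eq_zero.1 (?_ : c.χ i (c.Δ c.φ) * c.χ i h = 0)).resolve_left hφ'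
      linear_combination -d1
    refine ⟨k1, ?_⟩
    rw [k1] at d2
    refine (mul_eq_zero.1 (?_ : (c.χ i (c.Δ c.φ) * 2) * c.χ i (c.Δ h) = 0)).resolve_left
      (mul_ne_zero hφ' h2)
    linear_combination -d2 + 2 * kfg
  have hinj : Function.Injective (E.domRestrict U) := by
    rw [← LinearMap.ker_eq_bot, LinearMap.ker_eq_bot']
    intro f hf
    have hf' : ∀ i, E f i = 0 := fun i => congrFun hf i
    have := key f f.2 f f.2 fun i => by rw [hf', zero_mul]
    exact Subtype.ext (this.elim id id)
  refine ⟨LinearMap.range (E.domRestrict U), ?_, ?_⟩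
  · rw [LinearMap.finrank_range_of_inj hinj]
    change _ ≤ Module.finrank K U + Q.card at hdim
    omega
  · rintro _ ⟨f, rfl⟩ _ ⟨g, rfl⟩ h
    rcases key f f.2 g g.2 h with h | h
    · left; rw [LinearMap.domRestrict_apply, h, map_zero]
    · right; rw [LinearMap.domRestrict_apply, h, map_zero]

end
end CurveData
end SepCode
end

/-! ### The field with 121 elements and the inner code -/

section
namespace SepCode


/-- Concretely, `𝔽₁₂₁ = 𝔽₁₁(i)` with `i² = -1`. -/
abbrev F121 : Type := QuadraticAlgebra (ZMod 11) (-1) 0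

instance : Fact (Nat.Prime 11) := ⟨by norm_num⟩

instance : Fact (∀ z : ZMod 11, z ^ 2 ≠ -1 + 0 * z) := ⟨by decide⟩

instance : DecidableEq F121 := fun x y =>
  decidable_of_iff (x.re = y.re ∧ x.im = y.im) QuadraticAlgebra.ext_iff.symm

/-- The twenty elements `a + b i` of `𝔽₁₂₁` over which every level of the tower splits completely. -/
def splitSet : Finset F121 :=
  ([(1, 3), (1, 8), (2, 2), (2, 9), (3, 1), (3, 3), (3, 8), (3, 10), (4, 4), (4, 7), (7, 4), (7, 7),
    (8, 1), (8, 3), (8, 8), (8, 10), (9, 2), (9, 9), (10, 3), (10, 8)].map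
      fun p : ZMod 11 × ZMod 11 => (⟨p.1, p.2⟩ : F121)).toFinset

lemma splitSet_card : splitSet.card = 20 := by decide +kernel

lemma splitSet_good : IsGoodSet splitSet where
  ne_zero := by decide +kernel
  pow_ne := by decide +kernel
  root := by decide +kernel

/-- The first `121` words, in increasing order, of the Nordstrom–Robinson code shortened to length `15`,
read as numbers in base two. -/
def words : List ℕ := [0, 442, 629, 975, 1115, 1325, 1762, 1940, 2215, 2513, 2590, 2920, 3324, 3398, 3721, 3891,
  4310, 4451, 4780, 4889, 5297, 5576, 5639, 6014, 6221, 6452, 6907, 7042, 7210, 7583, 7760,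
  8165, 8425, 8540, 8851, 8998, 9358, 9719, 9784, 10049, 10354, 10507, 10948, 11197, 11285,
  11680, 11887, 12250, 12351, 12677, 12874, 13296, 13412, 13586, 14045, 14251, 14488,
  14830, 14881, 15191, 15555, 15737, 16054, 16140, 16541, 16868, 16939, 17234, 17462,
  17795, 17996, 18425, 18634, 18815, 19120, 19205, 19553, 19736, 20183, 20398, 20600,
  20750, 21185, 21431, 21743, 21845, 22170, 22304, 22547, 22953, 23142, 23516, 23684,
  24050, 24125, 24395, 24647, 24881, 25342, 25480, 25808, 25962, 26277, 26399, 26668,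
  27030, 27225, 27619, 27835, 28109, 28162, 28532, 28834, 29147, 29204, 29549, 29705,
  30140, 30323, 30662, 30965]

/-- Number of ones among the lowest fifteen binary digits. -/
def weight (x : ℕ) : ℕ :=
  x % 2 + x / 2 % 2 + x / 4 % 2 + x / 8 % 2 + x / 16 % 2 + x / 32 % 2 + x / 64 % 2 + x / 128 % 2 +
  x / 256 % 2 + x / 512 % 2 + x / 1024 % 2 + x / 2048 % 2 + x / 4096 % 2 + x / 8192 % 2 + x / 16384 % 2

lemma words_length : words.length = 121 := by decide +kernel

lemma words_dist : words.Pairwise fun x y => 6 ≤ weight (x ^^^ y) ∧ weight (x ^^^ y) ≤ 11 := by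
  decide +kernel
end SepCode
end

/-! ### Concatenation and the rate -/

namespace SepCode

lemma weight_eq (x : ℕ) : weight x = ∑ i : Fin 15, if x.testBit i then 1 else 0 := by
  have h : ∀ i, (if x.testBit i then 1 else 0) = x / 2 ^ i % 2 := by
    intro i
    rw [Nat.testBit_eq_decide_div_mod_eq]
    rcases Nat.mod_two_eq_zero_or_one (x / 2 ^ i) with h | h <;> simp [h]
  simp only [h, Fin.sum_univ_succ, weight]
  simp
  ring

/-- The inner code: elements of `𝔽₁₂₁` are sent to binary words of length `15`. -/
def inner (a : F121) (i : Fin 15) : ZMod 2 :=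
  if (words.getD (11 * a.re.val + a.im.val) 0).testBit i then 1 else 0

lemma inner_dist {a b : F121} (h : a ≠ b) :
    6 ≤ hammingDist (inner a) (inner b) ∧ hammingDist (inner a) (inner b) ≤ 11 := by
  have hlt : ∀ a : F121, 11 * a.re.val + a.im.val < words.length := by
    intro a
    have := ZMod.val_lt a.re
    have := ZMod.val_lt a.im
    rw [words_length]
    omega
  have key : ∀ a b : F121, 11 * a.re.val + a.im.val < 11 * b.re.val + b.im.val →
      6 ≤ hammingDist (inner a) (inner b) ∧ hammingDist (inner a) (inner b) ≤ 11 := by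
    intro a b hab
    have h1 := List.pairwise_iff_getElem.1 words_dist _ _ (hlt a) (hlt b) hab
    have h2 : hammingDist (inner a) (inner b) = weight (words[11 * a.re.val + a.im.val]'(hlt a)
        ^^^ words[11 * b.re.val + b.im.val]'(hlt b)) := by
      rw [weight_eq, hammingDist, Finset.card_filter]
      refine Finset.sum_congr rfl fun i _ => ?_
      rw [inner, inner, List.getD_eq_getElem _ _ (hlt a), List.getD_eq_getElem _ _ (hlt b),
        Nat.testBit_xor]
      generalize Nat.testBit _ _ = p
      generalize Nat.testBit _ _ = q
      cases p <;> cases q <;> simp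
    rw [h2]
    exact h1
  rcases lt_trichotomy (11 * a.re.val + a.im.val) (11 * b.re.val + b.im.val) with h' | h' | h'
  · exact key a b h'
  · exfalso
    have := ZMod.val_lt a.im
    have := ZMod.val_lt b.im
    exact h (QuadraticAlgebra.ext (ZMod.val_injective 11 (by omega))
      (ZMod.val_injective 11 (by omega)))
  · rw [hammingDist_comm]
    exact key b a h'

lemma inner_injective : Function.Injective inner := by
  intro a b h
  by_contra hab
  have := (inner_dist hab).1
  rw [h, hammingDist_self] at this
  omega

/-- Concatenation of an outer word with the inner code. -/
def concat {κ : Type} (f : κ → F121) (p : κ × Fin 15) : ZMod 2 := inner (f p.1) p.2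

lemma concat_injective {κ : Type} : Function.Injective (concat (κ := κ)) := by
  intro f g h
  funext i
  exact inner_injective (funext fun j => congrFun h (i, j))

lemma hammingDist_concat {κ : Type} [Fintype κ] (f g : κ → F121) :
    hammingDist (concat f) (concat g) = ∑ i, hammingDist (inner (f i)) (inner (g i)) := by
  simp only [hammingDist, Finset.card_filter]
  rw [Fintype.sum_prod_type]
  rfl

/-- At a coordinate where `y` differs from both `x` and `z`, inner distances between `6` and `11` make
the triangle inequality strict, since `11 < 6 + 6`. -/
lemma concat_separating {κ : Type} [Fintype κ] {V : Submodule F121 (κ → F121)}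
    (hV : CurveData.IsIntersecting V) : IsSeparating21 (concat '' (V : Set (κ → F121))) := by
  rintro _ ⟨x, hx, rfl⟩ _ ⟨y, hy, rfl⟩ _ ⟨z, hz, rfl⟩ hxy hyz -
  simp only [hammingDist_concat]
  rw [← Finset.sum_add_distrib]
  have hex : ∃ i, (y - x) i * (y - z) i ≠ 0 := by
    by_contra! hc
    rcases hV _ (V.sub_mem hy hx) _ (V.sub_mem hy hz) hc with h | h
    · exact hxy (by rw [sub_eq_zero.1 h])
    · exact hyz (by rw [sub_eq_zero.1 h])
  obtain ⟨i, hi⟩ := hex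
  obtain ⟨h1, h2⟩ := mul_ne_zero_iff.1 hi
  rw [Pi.sub_apply, sub_ne_zero] at h1 h2
  refine Finset.sum_lt_sum (fun j _ => hammingDist_triangle _ _ _) ⟨i, Finset.mem_univ i, ?_⟩
  have k1 := (inner_dist h1.symm).1
  have k2 := (inner_dist h2).1
  by_cases h3 : x i = z i
  · rw [h3, hammingDist_self]
    omega
  · have := (inner_dist h3).2
    omega

lemma bddAbove_sizes (n : ℕ) :
    2 ^ n ∈ upperBounds {m : ℕ | ∃ C : Set (Fin n → ZMod 2), IsSeparating21 C ∧ C.ncard = m} := by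
  rintro _ ⟨C, -, rfl⟩
  have h := Set.ncard_le_card C
  rw [Nat.card_eq_fintype_card] at h
  simpa using h

lemma maxSepSize_le (n : ℕ) : maxSepSize n ≤ 2 ^ n :=
  csSup_le ⟨_, ∅, by simp [IsSeparating21], rfl⟩ (bddAbove_sizes n)

lemma le_maxSepSize {κ : Type} [Fintype κ] {n : ℕ} (e : Fin n ≃ κ) {C : Set (κ → ZMod 2)}
    (hC : IsSeparating21 C) : C.ncard ≤ maxSepSize n := by
  have hinj : Function.Injective fun x : κ → ZMod 2 => x ∘ e := e.surjective.injective_comp_right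
  have hd : ∀ x y : κ → ZMod 2, hammingDist (x ∘ e) (y ∘ e) = hammingDist x y := by
    intro x y
    simp only [hammingDist, Finset.card_filter]
    exact Equiv.sum_comp e fun i => if x i ≠ y i then 1 else 0
  refine le_csSup ⟨_, bddAbove_sizes n⟩ ⟨(fun x : κ → ZMod 2 => x ∘ e) '' C, ?_,
    Set.ncard_image_of_injective _ hinj⟩
  rintro _ ⟨x, hx, rfl⟩ _ ⟨y, hy, rfl⟩ _ ⟨z, hz, rfl⟩ h1 h2 h3
  simp only [hd]
  exact hC x hx y hy z hz (fun h => h1 (by rw [h])) (fun h => h2 (by rw [h]))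
    (fun h => h3 (by rw [h]))

lemma card_F121 : Nat.card F121 = 121 := by
  rw [Nat.card_congr (QuadraticAlgebra.equivProd (-1 : ZMod 11) 0), Nat.card_prod, Nat.card_zmod]

/-- Good separating codes at lengths `300 · 2ⁿ`. -/
lemma pow_le_maxSepSize (n : ℕ) : 121 ^ (9 * 2 ^ n) ≤ maxSepSize (300 * 2 ^ n) := by
  have hr : 0 < 2 ^ n := by positivity
  have h2 : (2 : F121) ≠ 0 := by decide
  obtain ⟨B, _, _, _, ⟨c⟩⟩ := exists_curve h2 ⟨⟨0, 1⟩, by decide⟩ splitSet_good n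
  obtain ⟨V, hV, hV'⟩ := c.exists_code h2 hr splitSet_good splitSet_card
  have hfin : Finite F121 := Nat.finite_of_card_ne_zero (by rw [card_F121]; norm_num)
  have hcard : Fintype.card (c.ι × Fin 15) = 300 * 2 ^ n := by
    rw [Fintype.card_prod, c.card_ι, splitSet_card, Fintype.card_fin]
    ring
  refine le_trans ?_ (le_maxSepSize (Fintype.equivFinOfCardEq hcard).symm (concat_separating hV'))
  rw [Set.ncard_image_of_injective _ concat_injective]
  change _ ≤ Nat.card V
  rw [Module.natCard_eq_pow_finrank (K := F121), card_F121]
  exact Nat.pow_le_pow_right (by norm_num) hV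

end SepCode

/-- The asymptotic exponent `ρ` of binary `(2,1)`-separating codes satisfies
`ρ ≥ (3/50) · log₂ 11 ≈ 0.207565`. -/
theorem rho_ge_three_fiftieths_logb_eleven :
    (3 : ℝ) / 50 * Real.logb 2 11 ≤ rho := by
  refine Filter.le_limsup_of_frequently_le ?_ ?_
  · rw [Filter.frequently_atTop]
    intro N
    refine ⟨300 * 2 ^ N, ?_, ?_⟩
    · have := @Nat.lt_two_pow_self N
      omega
    · rw [le_div_iff₀ (by positivity)]
      have h : ((121 : ℝ) ^ (9 * 2 ^ N)) ≤ (maxSepSize (300 * 2 ^ N) : ℝ) := by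
        exact_mod_cast SepCode.pow_le_maxSepSize N
      have h2 := Real.logb_le_logb_of_le (b := 2) (by norm_num) (by positivity) h
      refine le_trans (le_of_eq ?_) h2
      rw [show (121 : ℝ) = 11 ^ 2 by norm_num, ← pow_mul, Real.logb_pow]
      push_cast
      ring
  · refine Filter.isBoundedUnder_of ⟨1, fun n => ?_⟩
    have h : Real.logb 2 (maxSepSize n) ≤ n := by
      rcases Nat.eq_zero_or_pos (maxSepSize n) with h0 | h0
      · simp [h0]
      have h1 : (maxSepSize n : ℝ) ≤ 2 ^ n := by exact_mod_cast SepCode.maxSepSize_le n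
      have h2 := Real.logb_le_logb_of_le (b := 2) (by norm_num) (by exact_mod_cast h0) h1
      rwa [Real.logb_pow, Real.logb_self_eq_one (by norm_num), mul_one] at h2
    exact div_le_one_of_le₀ h (Nat.cast_nonneg n)
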